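/- Let A be a dehyperplane arrangement in an n-simanifold T. Then the number of chambers of A equals Σ_{X ∈ L_A} (−1)^{rk X} μ(T, X), where T is the minimum element of L_A. -/

import Mathlib

open Set

noncomputable section

/-- The ambient Euclidean space `ℝ^N`. -/
abbrev Euc (N : ℕ) := EuclideanSpace ℝ (Fin N)

/-- An `i`-simanifold: a nonempty (open, i.e. boundaryless) contractible topological
`i`-manifold, realized as a subset of the ambient space. -/
def IsSimanifold {N : ℕ} (i : ℕ) (S : Set (Euc N)) : Prop :=
  S.Nonempty ∧ ContractibleSpace S ∧ Nonempty (ChartedSpace (EuclideanSpace ℝ (Fin i)) S)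

/-- A dehyperplane in an `n`-simanifold `T`: an `(n-1)`-simanifold `P ⊆ T` cutting `T`
into two `n`-simanifolds `plus` and `minus`, with `plus ⊔ P ⊔ minus = T` and
`closure plus ∩ closure minus = P`. -/
structure Dehyperplane (N n : ℕ) (T : Set (Euc N)) where
  P : Set (Euc N)
  plus : Set (Euc N)
  minus : Set (Euc N)
  simP : IsSimanifold (n - 1) P
  simPlus : IsSimanifold n plus
  simMinus : IsSimanifold n minus
  union_eq : plus ∪ P ∪ minus = T
  disj_pP : Disjoint plus P
  disj_pm : Disjoint plus minus
  disj_Pm : Disjoint P minus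
  closure_eq : closure plus ∩ closure minus = P

/-- `L_A`: the set of nonempty intersections of elements of `A` (empty intersection `T`),
the flats of `A`. (Ordered by reverse inclusion: `X ≤ Y ↔ Y ⊆ X`.) -/
def flats {N n : ℕ} {T : Set (Euc N)} (A : Set (Dehyperplane N n T)) : Set (Set (Euc N)) :=
  {X | X.Nonempty ∧ ∃ B ⊆ A, X = T ∩ ⋂ P ∈ B, P.P}

/-- A dehyperplane arrangement (DA) in the `n`-simanifold `T`. -/
def IsDA {N : ℕ} (n : ℕ) (T : Set (Euc N)) (A : Set (Dehyperplane N n T)) : Prop :=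
  A.Finite ∧ ∀ P ∈ A, ∀ X ∈ flats A, (P.P ∩ X).Nonempty →
    X ⊆ P.P ∨ ∃ i, 1 ≤ i ∧ i ≤ n ∧ IsSimanifold (i - 1) (P.P ∩ X) ∧
      IsSimanifold i (P.plus ∩ X) ∧ IsSimanifold i (P.minus ∩ X)

/-- `P^ε` for a sign `ε ∈ {+,0,-}`. -/
def Dehyperplane.part {N n : ℕ} {T : Set (Euc N)} (P : Dehyperplane N n T) :
    SignType → Set (Euc N)
  | .pos => P.plus
  | .zero => P.P
  | .neg => P.minus

/-- A face of `A`: a nonempty set of the form `⋂_{P ∈ A} P^{ε_P}`. -/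
def IsFace {N n : ℕ} {T : Set (Euc N)} (A : Set (Dehyperplane N n T))
    (F : Set (Euc N)) : Prop :=
  F.Nonempty ∧ ∃ ε : Dehyperplane N n T → SignType, F = T ∩ ⋂ P ∈ A, P.part (ε P)

/-- A chamber of `A`: a face with `ε_P ≠ 0` for all `P ∈ A`. -/
def IsChamber {N n : ℕ} {T : Set (Euc N)} (A : Set (Dehyperplane N n T))
    (F : Set (Euc N)) : Prop :=
  F.Nonempty ∧ ∃ ε : Dehyperplane N n T → SignType,
    (∀ P ∈ A, ε P ≠ 0) ∧ F = T ∩ ⋂ P ∈ A, P.part (ε P)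

/-- The restriction `A^X = {P ∩ X | P ∈ A, X ⊄ P, P ∩ X ≠ ∅}`, as dehyperplanes in `X`
(viewed as an `m`-simanifold), with halves `P^± ∩ X`. -/
def restrict {N n : ℕ} {T : Set (Euc N)} (A : Set (Dehyperplane N n T)) (m : ℕ)
    (X : Set (Euc N)) : Set (Dehyperplane N m X) :=
  {Q | ∃ P ∈ A, ¬ X ⊆ P.P ∧ (P.P ∩ X).Nonempty ∧
    Q.P = P.P ∩ X ∧ Q.plus = P.plus ∩ X ∧ Q.minus = P.minus ∩ X}

/-- The dimension of a subset of `ℝ^N`: the largest `i` such that `S` contains an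
`i`-simanifold. -/
def sdim {N : ℕ} (S : Set (Euc N)) : ℕ :=
  sSup {i | ∃ T : Set (Euc N), IsSimanifold i T ∧ T ⊆ S}

namespace DA

/-- mod 2 chains on lists of points. -/
abbrev Ch (V : Type*) := List V →₀ ZMod 2

section chains
variable {V : Type*}

lemma ch_add_self (a : Ch V) : a + a = 0 := ZModModule.add_self a

lemma ch_eq_of_add {a b : Ch V} (h : a + b = 0) : a = b := by
  have := ch_add_self b
  calc a = a + (b + b) := by rw [this, add_zero]
    _ = b := by rw [← add_assoc, h, zero_add]

/-- cone operator -/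
def cone (v : V) : Ch V →ₗ[ZMod 2] Ch V := Finsupp.lmapDomain _ _ (List.cons v)

lemma cone_single (v : V) (l : List V) (r : ZMod 2) :
    cone v (Finsupp.single l r) = Finsupp.single (v :: l) r := by
  simp [cone]

def bd0 : List V → Ch V
  | [] => 0
  | v :: l => Finsupp.single l 1 + cone v (bd0 l)

/-- boundary operator -/
def bd : Ch V →ₗ[ZMod 2] Ch V := Finsupp.linearCombination (ZMod 2) bd0

lemma bd_single (l : List V) : bd (Finsupp.single l 1) = bd0 l := by simp [bd]

lemma bd_cone (v : V) (c : Ch V) : bd (cone v c) = c + cone v (bd c) := by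
  have : bd ∘ₗ cone v = LinearMap.id + (cone v) ∘ₗ bd := by
    refine Finsupp.lhom_ext' fun l => LinearMap.ext_ring ?_
    simp [cone_single, bd_single, bd0]
  exact LinearMap.congr_fun this c

lemma bd_bd (c : Ch V) : bd (bd c) = 0 := by
  have : bd ∘ₗ bd = (0 : Ch V →ₗ[ZMod 2] Ch V) := by
    refine Finsupp.lhom_ext' fun l => LinearMap.ext_ring ?_
    simp only [LinearMap.comp_apply, Finsupp.lsingle_apply, bd_single, LinearMap.zero_apply]
    induction l with
    | nil => simp [bd0]
    | cons v l ih => simp [bd0, bd_cone, bd_single, ih, ch_add_self]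
  exact LinearMap.congr_fun this c

end chains

section conv
variable {V : Type*} [NormedAddCommGroup V] [NormedSpace ℝ V]

/-- convex hull of a list -/
def hull (l : List V) : Set V := convexHull ℝ {x | x ∈ l}

/-- n-chains (length n lists) in W -/
def Cn (n : ℕ) (W : Set V) : Submodule (ZMod 2) (Ch V) :=
  Finsupp.supported (ZMod 2) (ZMod 2) {l | l.length = n ∧ hull l ⊆ W}

lemma single_mem_Cn {n : ℕ} {W : Set V} {l : List V} (h : l.length = n) (h' : hull l ⊆ W) (r) :
    Finsupp.single l r ∈ Cn n W :=
  Finsupp.single_mem_supported _ _ ⟨h, h'⟩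

/-- induction principle -/
lemma Cn_induction {n : ℕ} {W : Set V} {p : Ch V → Prop} (h0 : p 0)
    (ha : ∀ a b, p a → p b → p (a + b))
    (hs : ∀ l : List V, l.length = n → hull l ⊆ W → p (Finsupp.single l 1)) :
    ∀ z ∈ Cn n W, p z := by
  intro z hz
  rw [Cn, Finsupp.supported_eq_span_single] at hz
  induction hz using Submodule.span_induction with
  | mem x hx => obtain ⟨l, hl, rfl⟩ := hx; exact hs l hl.1 hl.2
  | zero => exact h0
  | add x y _ _ hx hy => exact ha x y hx hy
  | smul a x _ hx =>
    rcases (by decide : ∀ a : ZMod 2, a = 0 ∨ a = 1) a with rfl | rfl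
    · simpa using h0
    · simpa using hx

lemma Cn_mono {n : ℕ} {W W' : Set V} (h : W ⊆ W') : Cn n W ≤ Cn n W' :=
  Finsupp.supported_mono fun _ hl => ⟨hl.1, hl.2.trans h⟩

lemma Cn_inter {n : ℕ} {W W' : Set V} {z : Ch V} (h : z ∈ Cn n W) (h' : z ∈ Cn n W') :
    z ∈ Cn n (W ∩ W') := by
  intro l hl
  exact ⟨(h hl).1, subset_inter (h hl).2 (h' hl).2⟩

lemma hull_mono {l l' : List V} (h : ∀ x ∈ l, x ∈ l') : hull l ⊆ hull l' := convexHull_mono h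

lemma mem_hull {l : List V} {x : V} (h : x ∈ l) : x ∈ hull l := subset_convexHull ℝ _ h

lemma hull_subset_of {l : List V} {S : Set V} (hS : Convex ℝ S) (h : ∀ x ∈ l, x ∈ S) :
    hull l ⊆ S := convexHull_min h hS

lemma convex_hull (l : List V) : Convex ℝ (hull l) := convex_convexHull ℝ _

lemma isCompact_hull (l : List V) : IsCompact (hull l) :=
  (List.finite_toSet l).isCompact_convexHull ℝ

lemma hull_cons_star {v : V} {l : List V} {W : Set V} (hW : ∀ y ∈ W, segment ℝ v y ⊆ W)
    (hv : v ∈ W) (h : hull l ⊆ W) : hull (v :: l) ⊆ W := by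
  rcases List.eq_nil_or_concat l with rfl | ⟨l', b, hlb⟩
  · have : hull [v] = {v} := by simp [hull]
    rw [this]; simpa using hv
  · have : {x | x ∈ v :: l} = insert v {x | x ∈ l} := by ext; simp
    rw [hull, this, convexHull_insert ⟨b, by simp [hlb]⟩, convexJoin_singleton_left]
    simp only [iUnion_subset_iff]
    exact fun y hy => hW y (h hy)

lemma cone_mem {n : ℕ} {v : V} {W : Set V} (hW : ∀ y ∈ W, segment ℝ v y ⊆ W)
    (hv : v ∈ W) : ∀ z ∈ Cn n W, cone v z ∈ Cn (n + 1) W := by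
  apply Cn_induction
  · simp
  · intro a b ha hb; rw [map_add]; exact add_mem ha hb
  · intro l hl hl'
    rw [cone_single]
    exact single_mem_Cn (by simp [hl]) (hull_cons_star hW hv hl') _

lemma bd0_mem {W : Set V} (n : ℕ) (l : List V) (hl : l.length = n + 1) (h : hull l ⊆ W) :
    bd0 l ∈ Finsupp.supported (ZMod 2) (ZMod 2)
      {l' : List V | l'.length = n ∧ ∀ x ∈ l', x ∈ l} := by
  induction l generalizing n with
  | nil => simp at hl
  | cons v l ih =>
    rw [bd0]
    refine add_mem (Finsupp.single_mem_supported _ _ ⟨by simpa using hl, fun x hx => by simp [hx]⟩) ?_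
    rcases n with _ | n
    · have : l = [] := by simpa using hl
      subst this
      simp [bd0]
    · have := ih n (by simpa using hl) ((hull_mono (fun x hx => by simp [hx])).trans h)
      rw [Finsupp.supported_eq_span_single] at this
      generalize bd0 l = w at this
      induction this using Submodule.span_induction with
      | mem x hx =>
        obtain ⟨l', hl', rfl⟩ := hx
        simp only [cone_single]
        refine Finsupp.single_mem_supported _ _ ⟨by simp [hl'.1], ?_⟩
        intro x hx
        rcases List.mem_cons.1 hx with rfl | hx
        · simp
        · simp [hl'.2 x hx]
      | zero => simp
      | add x y _ _ hx hy => rw [map_add]; exact add_mem hx hy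
      | smul a x _ hx => rw [map_smul]; exact Submodule.smul_mem _ _ hx

lemma bd_mem {n : ℕ} {W : Set V} : ∀ z ∈ Cn (n + 1) W, bd z ∈ Cn n W := by
  apply Cn_induction
  · simp
  · intro a b ha hb; rw [map_add]; exact add_mem ha hb
  · intro l hl hl'
    rw [bd_single]
    intro l' hl2
    have h := bd0_mem n l hl hl' hl2
    exact ⟨h.1, (hull_mono h.2).trans hl'⟩

lemma bd_zero_of_Cn0 {W : Set V} : ∀ z ∈ Cn 0 W, bd z = 0 := by
  apply Cn_induction
  · simp
  · intro a b ha hb; rw [map_add, ha, hb, add_zero]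
  · intro l hl _
    rw [List.length_eq_zero_iff.1 hl, bd_single, bd0]

end conv
end DA

namespace DA
section subdiv
variable {V : Type*} [NormedAddCommGroup V] [NormedSpace ℝ V]

def bary (l : List V) : V := (l.length : ℝ)⁻¹ • l.sum

def sdn : ℕ → List V → Ch V
  | 0, l => Finsupp.single l 1
  | n + 1, l => cone (bary l) (Finsupp.linearCombination (ZMod 2) (sdn n) (bd0 l))

def tdn : ℕ → List V → Ch V
  | 0, _ => 0
  | n + 1, l => cone (bary l)
      (Finsupp.single l 1 + Finsupp.linearCombination (ZMod 2) (tdn n) (bd0 l))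

def Sd : Ch V →ₗ[ZMod 2] Ch V := Finsupp.linearCombination (ZMod 2) fun l => sdn l.length l
def Td : Ch V →ₗ[ZMod 2] Ch V := Finsupp.linearCombination (ZMod 2) fun l => tdn l.length l

lemma linComb_sdn (n : ℕ) : ∀ z ∈ Cn n (univ : Set V),
    Finsupp.linearCombination (ZMod 2) (sdn n) z = Sd z := by
  apply Cn_induction
  · simp
  · intro a b ha hb; rw [map_add, map_add, ha, hb]
  · intro l hl _; simp [Sd, hl]

lemma linComb_tdn (n : ℕ) : ∀ z ∈ Cn n (univ : Set V),
    Finsupp.linearCombination (ZMod 2) (tdn n) z = Td z := by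
  apply Cn_induction
  · simp
  · intro a b ha hb; rw [map_add, map_add, ha, hb]
  · intro l hl _; simp [Td, hl]

lemma single_mem_univ (l : List V) : Finsupp.single l 1 ∈ Cn l.length (univ : Set V) :=
  single_mem_Cn rfl (subset_univ _) _

lemma Sd_nil : Sd (Finsupp.single ([] : List V) 1) = Finsupp.single [] 1 := by simp [Sd, sdn]
lemma Td_nil : Td (Finsupp.single ([] : List V) 1) = 0 := by simp [Td, tdn]

lemma bd0_mem_univ {n : ℕ} {l : List V} (hl : l.length = n + 1) : bd0 l ∈ Cn n (univ : Set V) := by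
  rw [← bd_single]; exact bd_mem _ (hl ▸ single_mem_univ l)

lemma Sd_single {n : ℕ} {l : List V} (hl : l.length = n + 1) :
    Sd (Finsupp.single l 1) = cone (bary l) (Sd (bd0 l)) := by
  rw [← linComb_sdn n _ (bd0_mem_univ hl)]
  simp [Sd, hl, sdn]

lemma Td_single {n : ℕ} {l : List V} (hl : l.length = n + 1) :
    Td (Finsupp.single l 1) = cone (bary l) (Finsupp.single l 1 + Td (bd0 l)) := by
  rw [← linComb_tdn n _ (bd0_mem_univ hl)]
  simp [Td, hl, tdn]

lemma bd_Sd_aux (n : ℕ) : ∀ z ∈ Cn n (univ : Set V), bd (Sd z) = Sd (bd z) := by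
  induction n with
  | zero =>
    apply Cn_induction
    · simp
    · intro a b ha hb; simp only [map_add, ha, hb]
    · intro l hl _
      rw [List.length_eq_zero_iff.1 hl, Sd_nil, bd_single, bd0, map_zero]
  | succ n ih =>
    apply Cn_induction
    · simp
    · intro a b ha hb; simp only [map_add, ha, hb]
    · intro l hl _
      rw [Sd_single hl, bd_cone, ih _ (bd0_mem_univ hl), ← bd_single, bd_bd]
      simp

lemma ch_induction {p : Ch V → Prop} (h : ∀ n, ∀ z ∈ Cn n (univ : Set V), p z)
    (ha : ∀ a b, p a → p b → p (a + b)) (z : Ch V) : p z := by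
  induction z using Finsupp.induction_linear with
  | zero => exact h 0 0 (zero_mem _)
  | add f g hf hg => exact ha f g hf hg
  | single l r => exact h l.length _ (single_mem_Cn rfl (subset_univ _) r)

lemma bd_Sd (z : Ch V) : bd (Sd z) = Sd (bd z) := by
  refine ch_induction bd_Sd_aux ?_ z
  intro a b ha hb; simp only [map_add, ha, hb]

lemma bd_Td_aux (n : ℕ) : ∀ z ∈ Cn n (univ : Set V), bd (Td z) + Td (bd z) = z + Sd z := by
  induction n with
  | zero =>
    apply Cn_induction
    · simp
    · intro a b ha hb; simp only [map_add]; rw [add_add_add_comm, ha, hb]; abel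
    · intro l hl _
      rw [List.length_eq_zero_iff.1 hl, Sd_nil, bd_single, bd0, Td_nil]
      simp [ch_add_self]
  | succ n ih =>
    apply Cn_induction
    · simp
    · intro a b ha hb; simp only [map_add]; rw [add_add_add_comm, ha, hb]; abel
    · intro l hl _
      have h := ih _ (bd0_mem_univ hl)
      rw [← bd_single, bd_bd, map_zero, add_zero] at h
      rw [Td_single hl, bd_cone, map_add, ← bd_single, h, ← add_assoc (bd _), ch_add_self,
        zero_add, bd_single, ← Sd_single hl, add_assoc, add_right_comm, ← add_assoc]
      rw [add_assoc, ch_add_self, add_zero]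

lemma bd_Td (z : Ch V) : bd (Td z) + Td (bd z) = z + Sd z := by
  refine ch_induction bd_Td_aux ?_ z
  intro a b ha hb; simp only [map_add]; rw [add_add_add_comm, ha, hb]; abel

lemma sum_sub_le {δ : ℝ} {x : V} (l : List V) (h : ∀ y ∈ l, dist y x ≤ δ) :
    ‖l.sum - (l.length : ℝ) • x‖ ≤ l.length * δ := by
  induction l with
  | nil => simp
  | cons a l ih =>
    have h1 := ih fun y hy => h y (by simp [hy])
    have h2 := h a (by simp)
    rw [dist_eq_norm] at h2
    have : (a :: l).sum - ((a :: l).length : ℝ) • x = (a - x) + (l.sum - (l.length : ℝ) • x) := by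
      simp [add_smul]; abel
    rw [this]
    refine (norm_add_le _ _).trans ?_
    simp; linarith

lemma bary_dist {n : ℕ} {δ : ℝ} {x : V} {l : List V} (hl : l.length = n + 1) (hx : x ∈ l)
    (h : ∀ y ∈ l, dist y x ≤ δ) : dist (bary l) x ≤ n / (n + 1) * δ := by
  classical
  have hp := List.perm_cons_erase hx
  have hlen : (l.erase x).length = n := by rw [List.length_erase_of_mem hx, hl]; rfl
  have h1 := sum_sub_le (l.erase x) fun y hy => h y (List.mem_of_mem_erase hy)
  rw [hlen] at h1
  have hs : l.sum = x + (l.erase x).sum := by rw [hp.sum_eq]; simp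
  have hn : (0 : ℝ) < n + 1 := by positivity
  have : bary l - x = ((n : ℝ) + 1)⁻¹ • ((l.erase x).sum - (n : ℝ) • x) := by
    rw [bary, hl, hs, eq_inv_smul_iff₀ hn.ne', smul_sub]
    push_cast
    rw [smul_inv_smul₀ hn.ne', add_smul]; simp; abel
  rw [dist_eq_norm, this, norm_smul, norm_inv, Real.norm_of_nonneg hn.le, div_mul_eq_mul_div,
    div_eq_inv_mul]
  gcongr

lemma bary_mem {n : ℕ} {l : List V} (hl : l.length = n + 1) : bary l ∈ hull l := by
  have key : ∀ (l : List V) (S : Set V), Convex ℝ S → (∀ x ∈ l, x ∈ S) → l ≠ [] →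
      ((l.length : ℝ)⁻¹ • l.sum) ∈ S := by
    intro l S hS
    induction l with
    | nil => simp
    | cons a l ih =>
      intro h _
      by_cases hl : l = []
      · subst hl; simpa using h a
      · have h1 := ih (fun x hx => h x (by simp [hx])) hl
        have hpos : (0 : ℝ) < l.length := by
          exact_mod_cast List.length_pos_iff.2 hl
        have := hS (h a (by simp)) h1 (a := ((l.length : ℝ) + 1)⁻¹)
          (b := ((l.length : ℝ) + 1)⁻¹ * l.length) (by positivity) (by positivity) (by field_simp; ring)
        convert this using 1
        rw [smul_smul, mul_assoc, mul_inv_cancel₀ hpos.ne']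
        simp
  exact key l _ (convex_hull l) (fun x hx => mem_hull hx) (by rintro rfl; simp at hl)

/-- Small lists inside `H`. -/
def small (n : ℕ) (H : Set V) (δ : ℝ) : Set (List V) :=
  {l | l.length = n ∧ (∀ x ∈ l, x ∈ H) ∧ ∀ x ∈ l, ∀ y ∈ l, dist x y ≤ δ}

lemma supp_induction {W : Type*} {S : Set (List W)} {p : Ch W → Prop} (h0 : p 0)
    (ha : ∀ a b, p a → p b → p (a + b))
    (hs : ∀ l ∈ S, p (Finsupp.single l 1)) :
    ∀ z ∈ Finsupp.supported (ZMod 2) (ZMod 2) S, p z := by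
  intro z hz
  rw [Finsupp.supported_eq_span_single] at hz
  induction hz using Submodule.span_induction with
  | mem x hx => obtain ⟨l, hl, rfl⟩ := hx; exact hs l hl
  | zero => exact h0
  | add x y _ _ hx hy => exact ha x y hx hy
  | smul a x _ hx =>
    rcases (by decide : ∀ a : ZMod 2, a = 0 ∨ a = 1) a with rfl | rfl
    · simpa using h0
    · simpa using hx

lemma bd0_small {n : ℕ} {H : Set V} {δ : ℝ} {l : List V} (hl : l ∈ small (n + 1) H δ) :
    bd0 l ∈ Finsupp.supported (ZMod 2) (ZMod 2) (small n H δ) := by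
  intro l' hl'
  have h := bd0_mem n l hl.1 (subset_univ _) hl'
  exact ⟨h.1, fun x hx => hl.2.1 x (h.2 x hx), fun x hx y hy => hl.2.2 x (h.2 x hx) y (h.2 y hy)⟩

lemma Sd_small {H : Set V} (hH : Convex ℝ H) {δ : ℝ} (hδ : 0 ≤ δ) (n : ℕ) :
    ∀ z ∈ Finsupp.supported (ZMod 2) (ZMod 2) (small n H δ),
      Sd z ∈ Finsupp.supported (ZMod 2) (ZMod 2) (small n H (n / (n + 1) * δ)) := by
  induction n generalizing H with
  | zero =>
    apply supp_induction
    · simp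
    · intro a b ha hb; rw [map_add]; exact add_mem ha hb
    · intro l hl
      rw [List.length_eq_zero_iff.1 hl.1, Sd_nil]
      exact Finsupp.single_mem_supported _ _ ⟨rfl, by simp, by simp⟩
  | succ n ih =>
    apply supp_induction
    · simp
    · intro a b ha hb; rw [map_add]; exact add_mem ha hb
    · intro l hl
      rw [Sd_single hl.1]
      have hl2 : l ∈ small (n + 1) (hull l) δ := ⟨hl.1, fun x hx => mem_hull hx, hl.2.2⟩
      have h1 := ih (convex_hull l) _ (bd0_small hl2)
      generalize Sd (bd0 l) = w at h1
      have hsub : hull l ⊆ H := hull_subset_of hH hl.2.1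
      have hle : (n : ℝ) / (n + 1) ≤ ((n + 1 : ℕ) : ℝ) / ((n + 1 : ℕ) + 1) := by
        push_cast
        rw [div_le_div_iff₀ (by positivity) (by positivity)]; nlinarith
      have hball : ∀ y ∈ hull l, dist (bary l) y ≤ ((n + 1 : ℕ) : ℝ) / ((n + 1 : ℕ) + 1) * δ := by
        have : hull l ⊆ Metric.closedBall (bary l) ((n : ℝ) / (n + 1) * δ) := by
          refine hull_subset_of (convex_closedBall _ _) fun x hx => ?_
          rw [Metric.mem_closedBall, dist_comm]
          exact bary_dist hl.1 hx fun y hy => hl.2.2 y hy x hx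
        intro y hy
        have h2 := this hy
        rw [Metric.mem_closedBall, dist_comm] at h2
        exact h2.trans (by gcongr)
      revert w
      apply supp_induction
      · simp
      · intro a b ha hb; rw [map_add]; exact add_mem ha hb
      · intro l' hl'
        rw [cone_single]
        refine Finsupp.single_mem_supported _ _ ⟨by simp [hl'.1], ?_, ?_⟩
        · intro x hx
          rcases List.mem_cons.1 hx with rfl | hx
          · exact hsub (bary_mem hl.1)
          · exact hsub (hl'.2.1 x hx)
        · intro x hx y hy
          rcases List.mem_cons.1 hx with rfl | hx <;> rcases List.mem_cons.1 hy with rfl | hy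
          · rw [dist_self]; positivity
          · exact hball y (hl'.2.1 y hy)
          · rw [dist_comm]; exact hball x (hl'.2.1 x hx)
          · exact (hl'.2.2 x hx y hy).trans (by gcongr)

lemma Sd_mem {n : ℕ} {W : Set V} : ∀ z ∈ Cn n W, Sd z ∈ Cn n W := by
  apply Cn_induction
  · simp
  · intro a b ha hb; rw [map_add]; exact add_mem ha hb
  · intro l hl hl'
    obtain ⟨δ, hδ⟩ := (isCompact_hull l).isBounded.subset_closedBall (0 : V)
    have hd : l ∈ small n (hull l) (2 * |δ|) := ⟨hl, fun x hx => mem_hull hx, fun x hx y hy => by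
      have h1 := hδ (mem_hull hx)
      have h2 := hδ (mem_hull hy)
      rw [Metric.mem_closedBall] at h1 h2
      have := dist_triangle_right x y 0
      have := le_abs_self δ
      linarith⟩
    intro l' h'
    have := Sd_small (convex_hull l) (by positivity) n _ (Finsupp.single_mem_supported _ _ hd) h'
    exact ⟨this.1, (hull_subset_of (convex_hull l) this.2.1).trans hl'⟩

lemma Td_mem_aux (n : ℕ) (W : Set V) : ∀ z ∈ Cn n W, Td z ∈ Cn (n + 1) W := by
  induction n generalizing W with
  | zero =>
    apply Cn_induction
    · simp
    · intro a b ha hb; rw [map_add]; exact add_mem ha hb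
    · intro l hl hl'
      rw [List.length_eq_zero_iff.1 hl, Td_nil]; simp
  | succ n ih =>
    apply Cn_induction
    · simp
    · intro a b ha hb; rw [map_add]; exact add_mem ha hb
    · intro l hl hl'
      rw [Td_single hl]
      refine Cn_mono hl' (cone_mem ?_ (bary_mem hl) _ ?_)
      · exact fun y hy => (convex_hull l).segment_subset (bary_mem hl) hy
      · refine add_mem (single_mem_Cn hl Subset.rfl _) (ih _ _ ?_)
        rw [← bd_single]
        exact bd_mem _ (single_mem_Cn hl Subset.rfl _)

lemma Td_mem {n : ℕ} {W : Set V} (z) (hz : z ∈ Cn n W) : Td z ∈ Cn (n + 1) W := Td_mem_aux n W z hz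

lemma Sdpow_mem {n : ℕ} {W : Set V} (m : ℕ) (z) (hz : z ∈ Cn n W) : (Sd^[m]) z ∈ Cn n W := by
  induction m with
  | zero => exact hz
  | succ m ih => rw [Function.iterate_succ_apply']; exact Sd_mem _ ih

lemma bd_Sdpow (m : ℕ) (z : Ch V) : bd (Sd^[m] z) = Sd^[m] (bd z) := by
  induction m with
  | zero => rfl
  | succ m ih => rw [Function.iterate_succ_apply', Function.iterate_succ_apply', bd_Sd, ih]

lemma Sdpow_add (m : ℕ) (a b : Ch V) : Sd^[m] (a + b) = Sd^[m] a + Sd^[m] b := by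
  induction m with
  | zero => rfl
  | succ m ih => simp only [Function.iterate_succ_apply', ih, map_add]

lemma Sdpow_zero (m : ℕ) : Sd^[m] (0 : Ch V) = 0 := by
  induction m with
  | zero => rfl
  | succ m ih => simp only [Function.iterate_succ_apply', ih, map_zero]

/-- a cycle is homologous to its subdivisions -/
lemma cycle_Sdpow {n : ℕ} {W : Set V} (m : ℕ) (z) (hz : z ∈ Cn n W) (h : bd z = 0) :
    ∃ t ∈ Cn (n + 1) W, bd t = z + Sd^[m] z := by
  induction m with
  | zero => exact ⟨0, zero_mem _, by simp [ch_add_self]⟩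
  | succ m ih =>
    obtain ⟨t, ht, htb⟩ := ih
    refine ⟨t + Td (Sd^[m] z), add_mem ht (Td_mem _ (Sdpow_mem m z hz)), ?_⟩
    have h1 := bd_Td (Sd^[m] z)
    rw [bd_Sdpow, h, Sdpow_zero, map_zero, add_zero] at h1
    rw [map_add, htb, h1, Function.iterate_succ_apply',
      show ∀ a b c : Ch V, a + b + (b + c) = a + c + (b + b) by intros; abel, ch_add_self, add_zero]

lemma Sdpow_small {H : Set V} (hH : Convex ℝ H) {δ : ℝ} (hδ : 0 ≤ δ) (n m : ℕ) :
    ∀ z ∈ Finsupp.supported (ZMod 2) (ZMod 2) (small n H δ),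
      Sd^[m] z ∈ Finsupp.supported (ZMod 2) (ZMod 2) (small n H (((n : ℝ) / (n + 1)) ^ m * δ)) := by
  intro z hz
  induction m with
  | zero => simpa using hz
  | succ m ih =>
    rw [Function.iterate_succ_apply', pow_succ', mul_assoc]
    exact Sd_small hH (by positivity) n _ ih

lemma exists_small {n : ℕ} {W1 W2 : Set V} (h1 : IsOpen W1) (h2 : IsOpen W2) :
    ∀ z ∈ Cn n (W1 ∪ W2), ∃ m, ∃ a ∈ Cn n W1, ∃ b ∈ Cn n W2, Sd^[m] z = a + b := by
  apply Cn_induction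
  · exact ⟨0, 0, zero_mem _, 0, zero_mem _, by simp⟩
  · rintro x y ⟨m, a, ha, b, hb, h⟩ ⟨m', a', ha', b', hb', h'⟩
    refine ⟨m + m', Sd^[m'] a + Sd^[m] a', add_mem (Sdpow_mem _ _ ha) (Sdpow_mem _ _ ha'),
      Sd^[m'] b + Sd^[m] b', add_mem (Sdpow_mem _ _ hb) (Sdpow_mem _ _ hb'), ?_⟩
    rw [Sdpow_add, Function.iterate_add_apply Sd m m' y, h', add_comm m m',
      Function.iterate_add_apply Sd m' m x, h, Sdpow_add, Sdpow_add]
    abel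
  · intro l hl hl'
    obtain ⟨δ0, hδ⟩ := (isCompact_hull l).isBounded.subset_closedBall (0 : V)
    set δ := 2 * |δ0|
    have hd : l ∈ small n (hull l) δ := ⟨hl, fun x hx => mem_hull hx, fun x hx y hy => by
      have h1 := hδ (mem_hull hx)
      have h2 := hδ (mem_hull hy)
      rw [Metric.mem_closedBall] at h1 h2
      have := dist_triangle_right x y 0
      have := le_abs_self δ0
      simp only [δ]
      linarith⟩
    obtain ⟨ε, hε, hleb⟩ := lebesgue_number_lemma_of_metric (isCompact_hull l)
      (c := fun b : Bool => if b then W1 else W2) (by rintro (_ | _) <;> simp [h1, h2])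
      (by intro x hx; rcases hl' hx with h | h
          · exact mem_iUnion.2 ⟨true, by simpa using h⟩
          · exact mem_iUnion.2 ⟨false, by simpa using h⟩)
    have hlim : Filter.Tendsto (fun m : ℕ => ((n : ℝ) / (n + 1)) ^ m * δ) Filter.atTop (nhds 0) := by
      have := (tendsto_pow_atTop_nhds_zero_of_lt_one (r := (n : ℝ) / (n + 1)) (by positivity)
        (by rw [div_lt_one (by positivity)]; linarith)).mul_const δ
      simpa using this
    obtain ⟨m, hm⟩ := (hlim.eventually (gt_mem_nhds hε)).exists
    refine ⟨m, ?_⟩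
    have hsm := Sdpow_small (convex_hull l) (by positivity) n m _
      (Finsupp.single_mem_supported (ZMod 2) (1 : ZMod 2) hd)
    generalize Sd^[m] (Finsupp.single l 1) = w at hsm
    revert w
    apply supp_induction
    · exact ⟨0, zero_mem _, 0, zero_mem _, by simp⟩
    · rintro x y ⟨a, ha, b, hb, h⟩ ⟨a', ha', b', hb', h'⟩
      exact ⟨a + a', add_mem ha ha', b + b', add_mem hb hb', by rw [h, h']; abel⟩
    · intro l' hl'
      have hcase : hull l' ⊆ W1 ∨ hull l' ⊆ W2 := by
        rcases l' with _ | ⟨x, l'⟩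
        · left; simp [hull]
        · obtain ⟨i, hi⟩ := hleb x (hl'.2.1 x (by simp))
          have hsub : hull (x :: l') ⊆ Metric.ball x ε := by
            refine hull_subset_of (convex_ball _ _) fun y hy => ?_
            exact (hl'.2.2 y hy x (by simp)).trans_lt hm
          rcases i with _ | _
          · right; simpa using hsub.trans hi
          · left; simpa using hsub.trans hi
      rcases hcase with h | h
      · exact ⟨_, single_mem_Cn hl'.1 h 1, 0, zero_mem _, by simp⟩
      · exact ⟨0, zero_mem _, _, single_mem_Cn hl'.1 h 1, by simp⟩

end subdiv
end DA

namespace DA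
section mv
variable {V : Type*} [NormedAddCommGroup V] [NormedSpace ℝ V]

def Bds (n : ℕ) (W : Set V) (z : Ch V) : Prop := ∃ c ∈ Cn (n + 1) W, bd c = z

lemma Bds.mono {n : ℕ} {W W' : Set V} (h : W ⊆ W') {z : Ch V} : Bds n W z → Bds n W' z := by
  rintro ⟨c, hc, h'⟩; exact ⟨c, Cn_mono h hc, h'⟩

lemma Bds.add {n : ℕ} {W : Set V} {z z' : Ch V} : Bds n W z → Bds n W z' → Bds n W (z + z') := by
  rintro ⟨c, hc, h⟩ ⟨c', hc', h'⟩; exact ⟨c + c', add_mem hc hc', by rw [map_add, h, h']⟩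

lemma Bds.zero {n : ℕ} {W : Set V} : Bds n W (0 : Ch V) := ⟨0, zero_mem _, map_zero _⟩

lemma Bds.bd {n : ℕ} {W : Set V} {c : Ch V} (hc : c ∈ Cn (n + 1) W) : Bds n W (bd c) := ⟨c, hc, rfl⟩

def Acyc (W : Set V) : Prop := ∀ n, ∀ z ∈ Cn n W, bd z = 0 → Bds n W z

def H1 (n : ℕ) (W : Set V) : Prop := ∀ z ∈ Cn n W, ∀ z' ∈ Cn n W, bd z = 0 → bd z' = 0 →
  Bds n W z ∨ Bds n W z' ∨ Bds n W (z + z')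

def H2 (n : ℕ) (W W' : Set V) : Prop := ∃ z ∈ Cn n W, bd z = 0 ∧ ¬ Bds n W' z

lemma acyc_of_star {W : Set V} {v : V} (hv : v ∈ W) (hW : ∀ y ∈ W, segment ℝ v y ⊆ W) :
    Acyc W := by
  intro n z hz h
  exact ⟨cone v z, cone_mem hW hv z hz, by rw [bd_cone, h, map_zero, add_zero]⟩

lemma acyc_of_convex {W : Set V} (hc : Convex ℝ W) (hn : W.Nonempty) : Acyc W := by
  obtain ⟨v, hv⟩ := hn
  exact acyc_of_star hv fun y hy => hc.segment_subset hv hy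

lemma mvA {n : ℕ} {W1 W2 : Set V} (h1 : IsOpen W1) (h2 : IsOpen W2) {z c1 c2 : Ch V}
    (hc1 : c1 ∈ Cn (n + 1) W1) (hc2 : c2 ∈ Cn (n + 1) W2) (hb1 : bd c1 = z) (hb2 : bd c2 = z)
    (hB : Bds (n + 1) (W1 ∪ W2) (c1 + c2)) : Bds n (W1 ∩ W2) z := by
  obtain ⟨e, he, heb⟩ := hB
  obtain ⟨m, e1, he1, e2, he2, hee⟩ := exists_small h1 h2 e he
  have hz : z ∈ Cn n (W1 ∩ W2) := Cn_inter (hb1 ▸ bd_mem _ hc1) (hb2 ▸ bd_mem _ hc2)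
  have hz0 : bd z = 0 := by rw [← hb1, bd_bd]
  obtain ⟨t, ht, htb⟩ := cycle_Sdpow m z hz hz0
  have key : Sd^[m] c1 + bd e1 = Sd^[m] c2 + bd e2 := by
    apply ch_eq_of_add
    have : bd (Sd^[m] e) = Sd^[m] c1 + Sd^[m] c2 := by rw [bd_Sdpow, heb, Sdpow_add]
    rw [hee, map_add] at this
    rw [show ∀ a b c d : Ch V, a + b + (c + d) = (a + c) + (b + d) by intros; abel, ← this,
      ch_add_self]
  have hy : Sd^[m] c1 + bd e1 ∈ Cn (n + 1) (W1 ∩ W2) := by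
    refine Cn_inter (add_mem (Sdpow_mem _ _ hc1) (bd_mem _ he1)) ?_
    rw [key]
    exact add_mem (Sdpow_mem _ _ hc2) (bd_mem _ he2)
  refine ⟨t + (Sd^[m] c1 + bd e1), add_mem ht hy, ?_⟩
  rw [map_add, map_add, htb, bd_bd, bd_Sdpow, hb1, add_zero, add_assoc, ch_add_self, add_zero]

lemma mvB {n : ℕ} {W1 W2 : Set V} (h1 : IsOpen W1) (h2 : IsOpen W2) {s : Ch V}
    (hs : s ∈ Cn n (W1 ∪ W2)) (hb : bd s = 0) :
    ∃ s1 ∈ Cn n W1, ∃ s2 ∈ Cn n W2, ∃ t ∈ Cn (n + 1) (W1 ∪ W2), s = s1 + s2 + bd t := by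
  obtain ⟨m, a, ha, b, hb', h⟩ := exists_small h1 h2 s hs
  obtain ⟨t, ht, htb⟩ := cycle_Sdpow m s hs hb
  refine ⟨a, ha, b, hb', t, ht, ?_⟩
  rw [htb, ← h, add_comm, add_assoc, ch_add_self, add_zero]

/-- if the splitting boundary bounds in the intersection then `s` bounds in the union. -/
lemma mvC {n : ℕ} {W1 W2 : Set V} (a1 : Acyc W1) (a2 : Acyc W2) {s1 s2 : Ch V}
    (hs1 : s1 ∈ Cn (n + 1) W1) (hs2 : s2 ∈ Cn (n + 1) W2) (he : bd s1 = bd s2)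
    (hB : Bds n (W1 ∩ W2) (bd s1)) : Bds (n + 1) (W1 ∪ W2) (s1 + s2) := by
  obtain ⟨b, hb, hbb⟩ := hB
  have k1 := a1 (n + 1) (s1 + b) (add_mem hs1 (Cn_mono inter_subset_left hb))
    (by rw [map_add, hbb, ch_add_self])
  have k2 := a2 (n + 1) (s2 + b) (add_mem hs2 (Cn_mono inter_subset_right hb))
    (by rw [map_add, hbb, he, ch_add_self])
  have := (k1.mono (subset_union_left (t := W2))).add (k2.mono (subset_union_right (s := W1)))
  rwa [show ∀ a b c : Ch V, a + b + (c + b) = a + c + (b + b) by intros; abel, ch_add_self,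
    add_zero] at this

lemma H1_up {n : ℕ} {W1 W2 : Set V} (h1 : IsOpen W1) (h2 : IsOpen W2) (a1 : Acyc W1)
    (a2 : Acyc W2) (h : H1 n (W1 ∩ W2)) : H1 (n + 1) (W1 ∪ W2) := by
  intro z hz z' hz' hb hb'
  obtain ⟨s1, hs1, s2, hs2, t, ht, rfl⟩ := mvB h1 h2 hz hb
  obtain ⟨s1', hs1', s2', hs2', t', ht', rfl⟩ := mvB h1 h2 hz' hb'
  simp only [map_add, bd_bd, add_zero] at hb hb'
  have e := ch_eq_of_add hb
  have e' := ch_eq_of_add hb'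
  have m1 : bd s1 ∈ Cn n (W1 ∩ W2) := Cn_inter (bd_mem _ hs1) (e ▸ bd_mem _ hs2)
  have m1' : bd s1' ∈ Cn n (W1 ∩ W2) := Cn_inter (bd_mem _ hs1') (e' ▸ bd_mem _ hs2')
  rcases h _ m1 _ m1' (bd_bd _) (bd_bd _) with k | k | k
  · exact Or.inl ((mvC a1 a2 hs1 hs2 e k).add (Bds.bd ht))
  · exact Or.inr (Or.inl ((mvC a1 a2 hs1' hs2' e' k).add (Bds.bd ht')))
  · right; right
    have := (mvC a1 a2 (add_mem hs1 hs1') (add_mem hs2 hs2') (by rw [map_add, map_add, e, e'])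
      (by rwa [map_add])).add ((Bds.bd ht).add (Bds.bd ht'))
    convert this using 1
    abel

lemma H2_up {n : ℕ} {W1 W2 W1' W2' : Set V} (h1' : IsOpen W1') (h2' : IsOpen W2')
    (a1 : Acyc W1) (a2 : Acyc W2) (i1 : W1 ⊆ W1') (i2 : W2 ⊆ W2')
    (h : H2 n (W1 ∩ W2) (W1' ∩ W2')) : H2 (n + 1) (W1 ∪ W2) (W1' ∪ W2') := by
  obtain ⟨z, hz, hb, hn⟩ := h
  obtain ⟨c1, hc1, hb1⟩ := a1 n z (Cn_mono inter_subset_left hz) hb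
  obtain ⟨c2, hc2, hb2⟩ := a2 n z (Cn_mono inter_subset_right hz) hb
  refine ⟨c1 + c2, add_mem (Cn_mono subset_union_left hc1) (Cn_mono subset_union_right hc2),
    by rw [map_add, hb1, hb2, ch_add_self], fun hB => hn ?_⟩
  exact mvA h1' h2' (Cn_mono i1 hc1) (Cn_mono i2 hc2) hb1 hb2 hB

lemma H1_down {n : ℕ} {W1 W2 : Set V} (h1 : IsOpen W1) (h2 : IsOpen W2) (a1 : Acyc W1)
    (a2 : Acyc W2) (h : H1 (n + 1) (W1 ∪ W2)) : H1 n (W1 ∩ W2) := by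
  intro z hz z' hz' hb hb'
  obtain ⟨c1, hc1, hb1⟩ := a1 n z (Cn_mono inter_subset_left hz) hb
  obtain ⟨c2, hc2, hb2⟩ := a2 n z (Cn_mono inter_subset_right hz) hb
  obtain ⟨c1', hc1', hb1'⟩ := a1 n z' (Cn_mono inter_subset_left hz') hb'
  obtain ⟨c2', hc2', hb2'⟩ := a2 n z' (Cn_mono inter_subset_right hz') hb'
  rcases h (c1 + c2) (add_mem (Cn_mono subset_union_left hc1) (Cn_mono subset_union_right hc2))
    (c1' + c2') (add_mem (Cn_mono subset_union_left hc1') (Cn_mono subset_union_right hc2'))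
    (by rw [map_add, hb1, hb2, ch_add_self]) (by rw [map_add, hb1', hb2', ch_add_self])
    with k | k | k
  · exact Or.inl (mvA h1 h2 hc1 hc2 hb1 hb2 k)
  · exact Or.inr (Or.inl (mvA h1 h2 hc1' hc2' hb1' hb2' k))
  · refine Or.inr (Or.inr (mvA h1 h2 (add_mem hc1 hc1') (add_mem hc2 hc2') ?_ ?_ ?_))
    · rw [map_add, hb1, hb1']
    · rw [map_add, hb2, hb2']
    · rwa [add_add_add_comm]

lemma H2_down {n : ℕ} {W1 W2 W1' W2' : Set V} (h1 : IsOpen W1) (h2 : IsOpen W2)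
    (a1' : Acyc W1') (a2' : Acyc W2') (i1 : W1 ⊆ W1') (i2 : W2 ⊆ W2')
    (h : H2 (n + 1) (W1 ∪ W2) (W1' ∪ W2')) : H2 n (W1 ∩ W2) (W1' ∩ W2') := by
  obtain ⟨z, hz, hb, hn⟩ := h
  obtain ⟨s1, hs1, s2, hs2, t, ht, rfl⟩ := mvB h1 h2 hz hb
  simp only [map_add, bd_bd, add_zero] at hb
  have e := ch_eq_of_add hb
  refine ⟨bd s1, Cn_inter (bd_mem _ hs1) (e ▸ bd_mem _ hs2), bd_bd _, fun hB => hn ?_⟩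
  exact (mvC a1' a2' (Cn_mono i1 hs1) (Cn_mono i2 hs2) e hB).add
    (Bds.bd (Cn_mono (union_subset_union i1 i2) ht))

/-- the punctured space -/
lemma H_punctured [FiniteDimensional ℝ V] :
    H1 (Module.finrank ℝ V) ({0}ᶜ : Set V) ∧ H2 (Module.finrank ℝ V) ({0}ᶜ : Set V) ({0}ᶜ) := by
  set m := Module.finrank ℝ V with hm
  let b : Module.Basis (Fin m) ℝ V := Module.finBasis ℝ V
  let f : Fin m → V → ℝ := fun i => b.coord i
  have hf : ∀ i, Continuous (f i) := fun i => LinearMap.continuous_of_finiteDimensional (b.coord i)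
  let W : ℕ → Set V := fun c => {y | ∃ i : Fin m, i.1 < c ∧ f i y ≠ 0}
  have hWo : ∀ c, IsOpen (W c) := by
    intro c
    have : W c = ⋃ i : Fin m, ⋃ _ : i.1 < c, {y | f i y ≠ 0} := by ext; simp [W]
    rw [this]
    exact isOpen_iUnion fun i => isOpen_iUnion fun _ => isOpen_ne_fun (hf i) continuous_const
  have key : ∀ c, c ≤ m → H1 c (W c) ∧ H2 c (W c) (W c) := by
    intro c
    induction c with
    | zero =>
      intro _
      have hW : W 0 = ∅ := by ext; simp [W]
      have h0 : ∀ z ∈ Cn 0 (∅ : Set V), z = 0 ∨ z = Finsupp.single [] 1 := by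
        apply Cn_induction
        · simp
        · rintro a b (rfl | rfl) (rfl | rfl) <;> simp [ch_add_self]
        · intro l hl _; rw [List.length_eq_zero_iff.1 hl]; simp
      rw [hW]
      constructor
      · intro z hz z' hz' _ _
        rcases h0 z hz with rfl | rfl
        · exact Or.inl Bds.zero
        rcases h0 z' hz' with rfl | rfl
        · exact Or.inr (Or.inl Bds.zero)
        · right; right; rw [ch_add_self]; exact Bds.zero
      · refine ⟨Finsupp.single [] 1, single_mem_Cn rfl (by simp [hull]) 1, by simp [bd_single, bd0], ?_⟩
        rintro ⟨c, hc, hcb⟩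
        have : c = 0 := by
          revert hcb; intro _
          ext l
          by_contra hne
          have := hc (Finsupp.mem_support_iff.2 hne)
          rcases l with _ | ⟨x, l⟩
          · simp at this
          · exact this.2 (mem_hull (x := x) (by simp))
        rw [this, map_zero] at hcb
        have := DFunLike.congr_fun hcb []
        simp at this
    | succ c ih =>
      intro hc
      obtain ⟨k1, k2⟩ := ih (by omega)
      let j : Fin m := ⟨c, hc⟩
      have gen : ∀ s : ℝ, s ≠ 0 → IsOpen (W c ∪ {y | s * f j y < 0}) ∧
          Acyc (W c ∪ {y | s * f j y < 0}) := by
        intro s hs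
        refine ⟨(hWo c).union (isOpen_lt (by fun_prop) continuous_const), ?_⟩
        let v : V := (-s) • b j
        have hvj : f j v = -s := by simp [f, v]
        have hvi : ∀ i : Fin m, i.1 < c → f i v = 0 := by
          intro i hi
          have : j ≠ i := by rintro rfl; simp [j] at hi
          simp [f, v, this]
        have hs2 : 0 < s * s := mul_self_pos.2 hs
        have hv : s * f j v < 0 := by rw [hvj]; nlinarith
        refine acyc_of_star (v := v) (Or.inr hv) ?_
        rintro y hy _ ⟨p, q, hp, hq, hpq, rfl⟩
        have hlin : ∀ i, f i (p • v + q • y) = p * f i v + q * f i y := by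
          intro i; simp [f]
        rcases hq.eq_or_lt with rfl | hq
        · obtain rfl : p = 1 := by linarith
          right; simpa using hv
        rcases hy with ⟨i, hi, hy⟩ | hy
        · left; refine ⟨i, hi, ?_⟩
          rw [hlin, hvi i hi, mul_zero, zero_add]; exact mul_ne_zero hq.ne' hy
        · right
          simp only [mem_setOf_eq] at hy hv ⊢
          rw [hlin, mul_add, mul_left_comm, mul_left_comm s q]
          nlinarith
      obtain ⟨o1, a1⟩ := gen 1 one_ne_zero
      obtain ⟨o2, a2⟩ := gen (-1) (by norm_num)
      have hi : (W c ∪ {y | 1 * f j y < 0}) ∩ (W c ∪ {y | -1 * f j y < 0}) = W c := by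
        rw [← union_inter_distrib_left]
        apply union_eq_left.2
        rintro y ⟨h1, h2⟩
        simp only [mem_setOf_eq] at h1 h2; linarith
      have hu : (W c ∪ {y | 1 * f j y < 0}) ∪ (W c ∪ {y | -1 * f j y < 0}) = W (c + 1) := by
        ext y
        constructor
        · rintro ((⟨i, h, h'⟩ | h) | (⟨i, h, h'⟩ | h))
          · exact ⟨i, by omega, h'⟩
          · refine ⟨j, by simp [j], fun h0 => ?_⟩
            simp [h0] at h
          · exact ⟨i, by omega, h'⟩
          · refine ⟨j, by simp [j], fun h0 => ?_⟩
            simp [h0] at h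
        · rintro ⟨i, h, h'⟩
          rcases Nat.lt_succ_iff_lt_or_eq.1 h with h | h
          · exact Or.inl (Or.inl ⟨i, h, h'⟩)
          · obtain rfl : i = j := Fin.ext h
            rcases lt_or_gt_of_ne h' with h | h
            · left; right; simpa using h
            · right; right; simpa using h
      rw [← hu]
      exact ⟨H1_up o1 o2 a1 a2 (by rwa [hi]), H2_up o1 o2 a1 a2 Subset.rfl Subset.rfl (by rwa [hi])⟩
  have hWm : W m = {0}ᶜ := by
    ext y
    simp only [mem_compl_iff, mem_singleton_iff]
    rw [← not_iff_not, not_not]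
    constructor
    · intro h
      apply b.ext_elem
      intro i
      by_contra hne
      exact h ⟨i, i.2, by simpa [f] using hne⟩
    · rintro rfl ⟨i, _, h⟩
      simp [f] at h
  rw [← hWm]
  exact key m le_rfl

end mv
end DA

namespace DA
section cones
variable {E : Type*} [NormedAddCommGroup E] [NormedSpace ℝ E]

/-- complement (in the punctured cone space) of the cone over `K` -/
def WK (K : Set E) : Set (E × ℝ) := {y | y ≠ 0 ∧ ¬ (0 < y.2 ∧ y.2⁻¹ • y.1 ∈ K)}

lemma WK_union (K K' : Set E) : WK (K ∪ K') = WK K ∩ WK K' := by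
  ext y; simp only [WK, mem_ofPred_eq, mem_inter_iff, mem_union]; tauto

lemma WK_inter (K K' : Set E) : WK (K ∩ K') = WK K ∪ WK K' := by
  ext y; simp only [WK, mem_ofPred_eq, mem_inter_iff, mem_union]; tauto

lemma WK_empty : WK (∅ : Set E) = {0}ᶜ := by
  ext y; simp [WK]

lemma WK_anti {K K' : Set E} (h : K ⊆ K') : WK K' ⊆ WK K :=
  fun _ hy => ⟨hy.1, fun hh => hy.2 ⟨hh.1, h hh.2⟩⟩

lemma isOpen_coneset {U : Set E} (hU : IsOpen U) :
    IsOpen {y : E × ℝ | 0 < y.2 ∧ y.2⁻¹ • y.1 ∈ U} := by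
  have : ContinuousOn (fun y : E × ℝ => y.2⁻¹ • y.1) {y | 0 < y.2} := by
    apply ContinuousOn.smul _ continuous_fst.continuousOn
    exact continuous_snd.continuousOn.inv₀ fun y hy => ne_of_gt hy
  exact this.isOpen_inter_preimage (isOpen_lt continuous_const continuous_snd) hU

lemma isOpen_WK {K : Set E} (hK : IsCompact K) : IsOpen (WK K) := by
  obtain ⟨R, hR⟩ := hK.isBounded.exists_norm_le
  have : WK K = {y | y.2 < 0} ∪ {y : E × ℝ | 0 < y.2 ∧ y.2⁻¹ • y.1 ∈ Kᶜ} ∪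
      {y | max R 0 * |y.2| < ‖y.1‖} := by
    ext ⟨u, s⟩
    simp only [WK, mem_ofPred_eq, mem_union, mem_compl_iff, ne_eq, Prod.mk_eq_zero]
    constructor
    · rintro ⟨h1, h2⟩
      rcases lt_trichotomy s 0 with h | h | h
      · tauto
      · right
        have : u ≠ 0 := fun h' => h1 ⟨h', h⟩
        simpa [h] using this
      · left; right; exact ⟨h, fun h' => h2 ⟨h, h'⟩⟩
    · rintro ((h | h) | h)
      · exact ⟨fun h' => h.ne h'.2, fun h' => absurd h'.1 (not_lt.2 h.le)⟩
      · exact ⟨fun h' => h.1.ne' h'.2, fun h' => h.2 h'.2⟩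
      · refine ⟨fun h' => ?_, fun h' => ?_⟩
        · rw [h'.1, h'.2] at h; simp at h
        · have := hR _ h'.2
          rw [norm_smul, norm_inv, Real.norm_eq_abs, abs_of_pos h'.1, inv_mul_le_iff₀ h'.1] at this
          rw [abs_of_pos h'.1] at h
          nlinarith [le_max_left R 0, h'.1]
  rw [this]
  refine ((isOpen_lt continuous_snd continuous_const).union
    (isOpen_coneset hK.isClosed.isOpen_compl)).union (isOpen_lt (by fun_prop) (by fun_prop))

lemma acyc_WK_singleton (x : E) : Acyc (WK ({x} : Set E)) := by
  refine acyc_of_star (v := (-x, -1)) ⟨by simp, by simp⟩ ?_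
  rintro ⟨u, s⟩ ⟨h1, h2⟩ _ ⟨p, q, hp, hq, hpq, rfl⟩
  have key : ∀ r : ℝ, 0 ≤ r → (u, s) ≠ r • ((x, 1) : E × ℝ) := by
    rintro r hr h
    simp only [Prod.smul_mk, smul_eq_mul, mul_one, Prod.mk.injEq] at h
    obtain ⟨rfl, rfl⟩ := h
    rcases hr.eq_or_lt with rfl | hr
    · simp at h1
    · exact h2 ⟨hr, by simp [smul_smul, hr.ne']⟩
  have key2 : ∀ r : ℝ, 0 ≤ r → p • ((-x, -1) : E × ℝ) + q • (u, s) ≠ r • ((x, 1) : E × ℝ) := by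
    intro r hr h
    rcases hq.eq_or_lt with rfl | hq
    · have : p = 1 := by linarith
      subst this
      have := congrArg Prod.snd h
      simp at this; linarith
    · refine key (q⁻¹ * (p + r)) (by positivity) ?_
      have h3 : q • ((u, s) : E × ℝ) = (p + r) • ((x, 1) : E × ℝ) := by
        rw [add_smul, ← h]; simp
      rw [mul_smul, ← h3, smul_smul, inv_mul_cancel₀ hq.ne', one_smul]
  refine ⟨fun h => key2 0 le_rfl (by rw [h]; simp), ?_⟩
  rintro ⟨h3, h4⟩
  refine key2 _ h3.le ?_
  ext1
  · rw [mem_singleton_iff, inv_smul_eq_iff₀ h3.ne'] at h4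
    exact h4
  · simp

lemma Cn_exists_of_directed {V : Type*} [NormedAddCommGroup V] [NormedSpace ℝ V] {n : ℕ}
    {W : Set V} {U : ℝ → Set V} (hU : ∀ ε > 0, IsOpen (U ε)) (hm : ∀ ε ε', ε ≤ ε' → U ε' ⊆ U ε)
    (hW : W ⊆ ⋃ ε : {ε : ℝ // 0 < ε}, U ε) : ∀ z ∈ Cn n W, ∃ ε > 0, z ∈ Cn n (U ε) := by
  apply Cn_induction
  · exact ⟨1, one_pos, zero_mem _⟩
  · rintro a b ⟨ε, h, ha⟩ ⟨ε', h', hb⟩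
    exact ⟨min ε ε', lt_min h h', add_mem (Cn_mono (hm _ _ (min_le_left _ _)) ha)
      (Cn_mono (hm _ _ (min_le_right _ _)) hb)⟩
  · intro l hl hlW
    haveI : Nonempty {ε : ℝ // 0 < ε} := ⟨⟨1, one_pos⟩⟩
    obtain ⟨ε, hε⟩ := (isCompact_hull l).elim_directed_cover (fun ε : {ε : ℝ // 0 < ε} => U ε)
      (fun ε => hU ε ε.2) (hlW.trans hW) (fun a b => ⟨⟨min a b, lt_min a.2 b.2⟩,
        hm _ _ (min_le_left _ _), hm _ _ (min_le_right _ _)⟩)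
    exact ⟨ε, ε.2, single_mem_Cn hl hε 1⟩

lemma slice {K : Set E} (hK : IsCompact K) {h : E → ℝ} (hh : ContinuousOn h K) {a b : ℝ}
    (hab : a ≤ b) (hKab : ∀ x ∈ K, h x ∈ Icc a b)
    (hac : ∀ t ∈ Icc a b, Acyc (WK (K ∩ h ⁻¹' {t}))) : Acyc (WK K) := by
  intro n z hz hbz
  have hcp : ∀ F : Set ℝ, IsClosed F → IsCompact (K ∩ h ⁻¹' F) := fun F hF =>
    hK.of_isClosed_subset (hh.preimage_isClosed_of_isClosed hK.isClosed hF) inter_subset_left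
  have glue : ∀ p q r, p ≤ q → q ≤ r → q ∈ Icc a b → Bds n (WK (K ∩ h ⁻¹' Icc p q)) z →
      Bds n (WK (K ∩ h ⁻¹' Icc q r)) z → Bds n (WK (K ∩ h ⁻¹' Icc p r)) z := by
    rintro p q r hpq hqr hq ⟨c1, hc1, hb1⟩ ⟨c2, hc2, hb2⟩
    have e1 : K ∩ h ⁻¹' Icc p r = (K ∩ h ⁻¹' Icc p q) ∪ (K ∩ h ⁻¹' Icc q r) := by
      rw [← inter_union_distrib_left, ← preimage_union, Icc_union_Icc_eq_Icc hpq hqr]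
    have e2 : K ∩ h ⁻¹' {q} = (K ∩ h ⁻¹' Icc p q) ∩ (K ∩ h ⁻¹' Icc q r) := by
      rw [← inter_inter_distrib_left, ← preimage_inter, Icc_inter_Icc_eq_singleton hpq hqr]
    rw [e1, WK_union]
    refine mvA (isOpen_WK (hcp _ isClosed_Icc)) (isOpen_WK (hcp _ isClosed_Icc)) hc1 hc2 hb1 hb2 ?_
    rw [← WK_inter, ← e2]
    refine hac q hq _ _ ?_ (by rw [map_add, hb1, hb2, ch_add_self])
    rw [e2, WK_inter]
    exact add_mem (Cn_mono subset_union_left hc1) (Cn_mono subset_union_right hc2)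
  have loc : ∀ t ∈ Icc a b, ∃ ε > 0, Bds n (WK (K ∩ h ⁻¹' Metric.closedBall t ε)) z := by
    intro t ht
    obtain ⟨c, hc, hcb⟩ := hac t ht n z (Cn_mono (WK_anti inter_subset_left) hz) hbz
    obtain ⟨ε, hε, hcε⟩ := Cn_exists_of_directed
      (U := fun ε => WK (K ∩ h ⁻¹' Metric.closedBall t ε))
      (fun ε _ => isOpen_WK (hcp _ Metric.isClosed_closedBall))
      (fun ε ε' hle => WK_anti (inter_subset_inter_right _
        (preimage_mono (Metric.closedBall_subset_closedBall hle)))) (fun y hy => by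
        rw [mem_iUnion]
        by_cases hk : 0 < y.2 ∧ y.2⁻¹ • y.1 ∈ K
        · have hne : h (y.2⁻¹ • y.1) ≠ t := fun h' => hy.2 ⟨hk.1, hk.2, h'⟩
          have hd : 0 < dist (h (y.2⁻¹ • y.1)) t := dist_pos.2 hne
          refine ⟨⟨_, half_pos hd⟩, hy.1, fun h' => ?_⟩
          have := h'.2.2
          simp only [mem_preimage, Metric.mem_closedBall] at this
          linarith
        · exact ⟨⟨1, one_pos⟩, hy.1, fun h' => hk ⟨h'.1, h'.2.1⟩⟩) c hc
    exact ⟨ε, hε, c, hcε, hcb⟩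
  choose! ε hε hB using loc
  obtain ⟨t, ht0, htm, ⟨m, hm⟩, htc⟩ := exists_monotone_Icc_subset_open_cover_Icc hab
    (c := fun t : Icc a b => {x : Icc a b | (x : ℝ) ∈ Metric.ball (t : ℝ) (ε t)})
    (fun t => Metric.isOpen_ball.preimage continuous_subtype_val)
    (fun x _ => mem_iUnion.2 ⟨x, by simpa using hε x x.2⟩)
  have good : ∀ i, Bds n (WK (K ∩ h ⁻¹' Icc a (t i))) z := by
    intro i
    induction i with
    | zero =>
      rw [ht0, Icc_self]
      exact hac a ⟨le_rfl, hab⟩ n z (Cn_mono (WK_anti inter_subset_left) hz) hbz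
    | succ i ih =>
      refine glue a (t i) _ (t i).2.1 (htm (Nat.le_succ i)) (t i).2 ih ?_
      obtain ⟨s, hs⟩ := htc i
      refine (hB s s.2).mono (WK_anti (inter_subset_inter_right _ (preimage_mono ?_)))
      intro x hx
      exact Metric.ball_subset_closedBall (hs (a := ⟨x, (t i).2.1.trans hx.1, hx.2.trans (t _).2.2⟩) hx)
  have := good m
  rw [hm m le_rfl] at this
  rwa [inter_eq_left.2 (show K ⊆ h ⁻¹' Icc a b from hKab)] at this
end cones
end DA

namespace DA
section cubes
variable {E : Type*} [NormedAddCommGroup E] [NormedSpace ℝ E]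
variable {ι : Type*} [Fintype ι]

/-- a cube `Icc lo hi` embedded in `E` with image `K0` and inverse `g`. -/
structure CubeData (K0 : Set E) (g : E → ι → ℝ) (lo hi : ι → ℝ) : Prop where
  compact : IsCompact K0
  cont : ContinuousOn g K0
  sing : ∀ x ∈ Icc lo hi, ∃ e, K0 ∩ g ⁻¹' {x} = {e}

/-- open box -/
def Ob (α β : ι → ℝ) : Set (ι → ℝ) := {x | ∀ i, x i ∈ Ioo (α i) (β i)}

lemma mem_Ob {α β x : ι → ℝ} : x ∈ Ob α β ↔ ∀ i, x i ∈ Ioo (α i) (β i) := Iff.rfl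

lemma isOpen_Ob (α β : ι → ℝ) : IsOpen (Ob α β) := by
  have : Ob α β = Set.pi univ fun i => Ioo (α i) (β i) := by ext; simp [Ob]
  rw [this]
  exact isOpen_set_pi finite_univ fun i _ => isOpen_Ioo

variable {K0 : Set E} {g : E → ι → ℝ} {lo hi : ι → ℝ}

lemma CubeData.isCompact (D : CubeData K0 g lo hi) {B : Set (ι → ℝ)} (hB : IsClosed B) :
    IsCompact (K0 ∩ g ⁻¹' B) :=
  D.compact.of_isClosed_subset (D.cont.preimage_isClosed_of_isClosed D.compact.isClosed hB)
    inter_subset_left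

lemma CubeData.isOpenW (D : CubeData K0 g lo hi) {B : Set (ι → ℝ)} (hB : IsClosed B) :
    IsOpen (WK (K0 ∩ g ⁻¹' B)) := isOpen_WK (D.isCompact hB)

lemma CubeData.slice (D : CubeData K0 g lo hi) {B : Set (ι → ℝ)} (hB : IsClosed B) (j : ι)
    {a b : ℝ} (hab : a ≤ b) (h : ∀ x ∈ B, x j ∈ Icc a b)
    (hac : ∀ t ∈ Icc a b, Acyc (WK (K0 ∩ g ⁻¹' (B ∩ {x | x j = t})))) :
    Acyc (WK (K0 ∩ g ⁻¹' B)) := by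
  refine DA.slice (D.isCompact hB) (h := fun y => g y j) ?_ hab (fun x hx => h _ hx.2) ?_
  · exact (continuous_apply j).comp_continuousOn (D.cont.mono inter_subset_left)
  · intro t ht
    have : K0 ∩ g ⁻¹' B ∩ (fun y => g y j) ⁻¹' {t} = K0 ∩ g ⁻¹' (B ∩ {x | x j = t}) := by
      ext y; simp only [mem_inter_iff, mem_preimage, mem_singleton_iff, mem_ofPred_eq]; tauto
    rw [this]; exact hac t ht

open Classical in
lemma Icc_slice {l u : ι → ℝ} {j : ι} {t : ℝ} (ht : t ∈ Icc (l j) (u j)) :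
    Icc l u ∩ {x | x j = t} = Icc (Function.update l j t) (Function.update u j t) := by
  ext x
  simp only [mem_inter_iff, mem_Icc, mem_ofPred_eq, Pi.le_def]
  constructor
  · rintro ⟨⟨h1, h2⟩, h3⟩
    refine ⟨fun i => ?_, fun i => ?_⟩ <;> rcases eq_or_ne i j with rfl | hi <;> simp_all
  · rintro ⟨h1, h2⟩
    have e : x j = t := le_antisymm (by simpa using h2 j) (by simpa using h1 j)
    refine ⟨⟨fun i => ?_, fun i => ?_⟩, e⟩ <;> rcases eq_or_ne i j with rfl | hi
    · rw [e]; exact ht.1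
    · simpa [hi] using h1 i
    · rw [e]; exact ht.2
    · simpa [hi] using h2 i

open Classical in
lemma update_bds {l u : ι → ℝ} {j : ι} {t : ℝ} (ht : t ∈ Icc (l j) (u j)) (hlu : l ≤ u)
    (hl : lo ≤ l) (hu : u ≤ hi) : lo ≤ Function.update l j t ∧
      Function.update l j t ≤ Function.update u j t ∧ Function.update u j t ≤ hi := by
  refine ⟨fun i => ?_, fun i => ?_, fun i => ?_⟩ <;> rcases eq_or_ne i j with rfl | hi
  · simpa using (hl i).trans ht.1
  · simpa [hi] using hl i
  · simp
  · simpa [hi] using hlu i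
  · simpa using ht.2.trans (hu i)
  · simpa [hi] using hu i

lemma CubeData.box (D : CubeData K0 g lo hi) {l u : ι → ℝ} (hl : lo ≤ l) (hlu : l ≤ u)
    (hu : u ≤ hi) : Acyc (WK (K0 ∩ g ⁻¹' Icc l u)) := by
  classical
  suffices ∀ s : Finset ι, ∀ l u : ι → ℝ, lo ≤ l → l ≤ u → u ≤ hi → (∀ i ∉ s, l i = u i) →
      Acyc (WK (K0 ∩ g ⁻¹' Icc l u)) from this Finset.univ l u hl hlu hu (by simp)
  intro s
  induction s using Finset.induction_on with
  | empty =>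
    intro l u hl hlu hu h
    obtain rfl : l = u := funext fun i => h i (by simp)
    obtain ⟨e, he⟩ := D.sing l ⟨hl, hu⟩
    rw [Icc_self, he]; exact acyc_WK_singleton e
  | insert j s hj ih =>
    intro l u hl hlu hu h
    refine D.slice isClosed_Icc j (hlu j) (fun x hx => ⟨hx.1 j, hx.2 j⟩) fun t ht => ?_
    rw [Icc_slice ht]
    obtain ⟨h1, h2, h3⟩ := update_bds ht hlu hl hu
    refine ih _ _ h1 h2 h3 fun i hi => ?_
    rcases eq_or_ne i j with rfl | hij
    · simp
    · simpa [hij] using h i (by simp [hij, hi])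

lemma CubeData.lshape (D : CubeData K0 g lo hi) {l u : ι → ℝ} (hl : lo ≤ l) (hlu : l ≤ u)
    (hu : u ≤ hi) (α β : ι → ℝ) (j : ι) {l' u' : ℝ} (hlu' : l' ≤ u')
    (hj : Icc (l j) (u j) \ Ioo (α j) (β j) = Icc l' u') :
    Acyc (WK (K0 ∩ g ⁻¹' (Icc l u \ Ob α β))) := by
  classical
  suffices ∀ s : Finset ι, j ∉ s → ∀ l u : ι → ℝ, lo ≤ l → l ≤ u → u ≤ hi →
      (∀ i ∉ s, i ≠ j → l i = u i) → Icc (l j) (u j) \ Ioo (α j) (β j) = Icc l' u' →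
      Acyc (WK (K0 ∩ g ⁻¹' (Icc l u \ Ob α β))) from
    this (Finset.univ.erase j) (by simp) l u hl hlu hu (by simp) hj
  intro s
  have hcl : ∀ l u : ι → ℝ, IsClosed (Icc l u \ Ob α β) := fun l u =>
    isClosed_Icc.sdiff (isOpen_Ob _ _)
  induction s using Finset.induction_on with
  | empty =>
    intro _ l u hl hlu hu h hj
    have hlu_new : l' ∈ Icc (l j) (u j) ∧ u' ∈ Icc (l j) (u j) := by
      have h1 : l' ∈ Icc l' u' := ⟨le_rfl, hlu'⟩
      have h2 : u' ∈ Icc l' u' := ⟨hlu', le_rfl⟩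
      rw [← hj] at h1 h2
      exact ⟨h1.1, h2.1⟩
    by_cases hO : ∀ i, i ≠ j → l i ∈ Ioo (α i) (β i)
    · have : Icc l u \ Ob α β = Icc (Function.update l j l') (Function.update u j u') := by
        ext x
        constructor
        · rintro ⟨hx, hxO⟩
          have hxj : x j ∈ Icc l' u' := by
            rw [← hj]
            refine ⟨⟨hx.1 j, hx.2 j⟩, fun hxj => hxO fun i => ?_⟩
            rcases eq_or_ne i j with rfl | hi
            · exact hxj
            · have := h i (by simp) hi
              rw [show x i = l i from le_antisymm (this ▸ hx.2 i) (hx.1 i)]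
              exact hO i hi
          constructor <;> intro i <;> rcases eq_or_ne i j with rfl | hi
          · simpa using hxj.1
          · simpa [hi] using hx.1 i
          · simpa using hxj.2
          · simpa [hi] using hx.2 i
        · rintro ⟨h1, h2⟩
          have hxj : x j ∈ Icc l' u' := ⟨by simpa using h1 j, by simpa using h2 j⟩
          have hxj' := hxj
          rw [← hj] at hxj'
          refine ⟨⟨fun i => ?_, fun i => ?_⟩, fun hxO => hxj'.2 (hxO j)⟩ <;>
            rcases eq_or_ne i j with rfl | hi
          · exact hxj'.1.1
          · simpa [hi] using h1 i
          · exact hxj'.1.2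
          · simpa [hi] using h2 i
      rw [this]
      refine D.box ?_ ?_ ?_ <;> intro i <;> rcases eq_or_ne i j with rfl | hi
      · simpa using (hl i).trans hlu_new.1.1
      · simpa [hi] using hl i
      · simpa using hlu'
      · simpa [hi] using hlu i
      · simpa using hlu_new.2.2.trans (hu i)
      · simpa [hi] using hu i
    · have : Icc l u \ Ob α β = Icc l u := by
        refine sdiff_eq_left.2 (disjoint_left.2 fun x hx hxO => hO fun i hi => ?_)
        have := h i (by simp) hi
        rw [← show x i = l i from le_antisymm (this ▸ hx.2 i) (hx.1 i)]
        exact hxO i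
      rw [this]; exact D.box hl hlu hu
  | insert k s hk ih =>
    intro hjs l u hl hlu hu h hj
    have hkj : j ≠ k := by rintro rfl; simp at hjs
    refine D.slice (hcl _ _) k (hlu k) (fun x hx => ⟨hx.1.1 k, hx.1.2 k⟩) fun t ht => ?_
    rw [← inter_sdiff_right_comm, Icc_slice ht]
    obtain ⟨h1, h2, h3⟩ := update_bds ht hlu hl hu
    refine ih (by simp at hjs; tauto) _ _ h1 h2 h3 (fun i hi hij => ?_) (by simpa [hkj] using hj)
    rcases eq_or_ne i k with rfl | hik
    · simp
    · simpa [hik] using h i (by simp [hik, hi]) hij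

lemma CubeData.main [FiniteDimensional ℝ E] (D : CubeData K0 g lo hi) (c : ι → ℝ) (s : Finset ι) :
    ∀ n : ℕ, n + s.card = Module.finrank ℝ E + 1 → ∀ l u : ι → ℝ, lo ≤ l → u ≤ hi →
    (∀ i ∉ s, l i = c i ∧ u i = c i) → 
    ((∀ α β : ι → ℝ, c ∈ Ob α β → (∀ i ∈ s, l i ≤ α i ∧ β i ≤ u i) →
      H1 n (WK (K0 ∩ g ⁻¹' (Icc l u \ Ob α β)))) ∧ 
    (∀ α β α' β' : ι → ℝ, c ∈ Ob α β → c ∈ Ob α' β' → α' ≤ α → β ≤ β' →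
      (∀ i ∈ s, l i ≤ α' i ∧ β' i ≤ u i) → 
      H2 n (WK (K0 ∩ g ⁻¹' (Icc l u \ Ob α β))) (WK (K0 ∩ g ⁻¹' (Icc l u \ Ob α' β'))))) := by
  classical
  have hcl : ∀ l u α β : ι → ℝ, IsClosed (Icc l u \ Ob α β) := fun l u α β =>
    isClosed_Icc.sdiff (isOpen_Ob _ _)
  induction s using Finset.induction_on with
  | empty =>
    intro n hn l u hl hu h
    have e1 : l = c := funext fun i => (h i (by simp)).1
    have e2 : u = c := funext fun i => (h i (by simp)).2
    subst e1; subst e2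
    have key : ∀ α β : ι → ℝ, u ∈ Ob α β → WK (K0 ∩ g ⁻¹' (Icc u u \ Ob α β)) = {0}ᶜ := by
      intro α β hc
      rw [← WK_empty]
      congr 1
      rw [Icc_self]
      rw [sdiff_eq_empty.2 (singleton_subset_iff.2 hc), preimage_empty, inter_empty]
    have hp := H_punctured (V := E × ℝ)
    rw [Module.finrank_prod, Module.finrank_self, ← hn, Finset.card_empty, add_zero] at hp
    exact ⟨fun α β hc _ => by rw [key _ _ hc]; exact hp.1, fun α β α' β' hc hc' _ _ _ => by
      rw [key _ _ hc, key _ _ hc']; exact hp.2⟩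
  | insert j s hj ih =>
    intro n hn l u hl hu h
    rw [Finset.card_insert_of_notMem hj] at hn
    set l1 := Function.update l j (c j) with hl1
    set u1 := Function.update u j (c j) with hu1
    have split : ∀ α β : ι → ℝ, c ∈ Ob α β → (∀ i ∈ insert j s, l i ≤ α i ∧ β i ≤ u i) → 
        (WK (K0 ∩ g ⁻¹' (Icc l u \ Ob α β)) = 
          WK (K0 ∩ g ⁻¹' (Icc l u1 \ Ob α β)) ∩ WK (K0 ∩ g ⁻¹' (Icc l1 u \ Ob α β))) ∧ 
        (WK (K0 ∩ g ⁻¹' (Icc l1 u1 \ Ob α β)) = 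
          WK (K0 ∩ g ⁻¹' (Icc l u1 \ Ob α β)) ∪ WK (K0 ∩ g ⁻¹' (Icc l1 u \ Ob α β))) ∧ 
        Acyc (WK (K0 ∩ g ⁻¹' (Icc l u1 \ Ob α β))) ∧ Acyc (WK (K0 ∩ g ⁻¹' (Icc l1 u \ Ob α β))) ∧
        lo ≤ l1 ∧ u1 ≤ hi := by
      intro α β hc hlu
      have lj := (hlu j (by simp)).1
      have uj := (hlu j (by simp)).2
      have lc := (hc j).1
      have uc := (hc j).2
      have hlc : l ≤ c := fun i => by
        by_cases hi : i ∈ insert j s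
        · exact (hlu i hi).1.trans (hc i).1.le
        · exact (h i hi).1.le
      have huc : c ≤ u := fun i => by
        by_cases hi : i ∈ insert j s
        · exact (hc i).2.le.trans (hlu i hi).2
        · exact (h i hi).2.ge
      have a1 : l1 ≤ c := fun i => by
        rcases eq_or_ne i j with rfl | hi
        · simp [hl1]
        · simpa [hl1, hi] using hlc i
      have a2 : c ≤ u1 := fun i => by
        rcases eq_or_ne i j with rfl | hi
        · simp [hu1]
        · simpa [hu1, hi] using huc i
      have a3 : l ≤ l1 := fun i => by
        rcases eq_or_ne i j with rfl | hi
        · simpa [hl1] using hlc i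
        · simp [hl1, hi]
      have a4 : u1 ≤ u := fun i => by
        rcases eq_or_ne i j with rfl | hi
        · simpa [hu1] using huc i
        · simp [hu1, hi]
      refine ⟨?_, ?_, ?_, ?_, hl.trans a3, a4.trans hu⟩
      · rw [← WK_union, ← inter_union_distrib_left, ← preimage_union, ← union_sdiff_distrib]
        congr 4
        ext x
        constructor
        · rintro ⟨h1, h2⟩
          rcases le_total (x j) (c j) with h3 | h3
          · refine Or.inl ⟨h1, fun i => ?_⟩
            rcases eq_or_ne i j with rfl | hi
            · simpa [hu1] using h3
            · simpa [hu1, hi] using h2 i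
          · refine Or.inr ⟨fun i => ?_, h2⟩
            rcases eq_or_ne i j with rfl | hi
            · simpa [hl1] using h3
            · simpa [hl1, hi] using h1 i
        · rintro (⟨h1, h2⟩ | ⟨h1, h2⟩)
          · exact ⟨h1, h2.trans a4⟩
          · exact ⟨a3.trans h1, h2⟩
      · rw [← WK_inter, ← inter_inter_distrib_left, ← preimage_inter]
        congr 3
        have e : Icc l1 u1 = Icc l u1 ∩ Icc l1 u := by
          rw [Icc_inter_Icc, sup_eq_right.2 a3, inf_eq_left.2 a4]
        rw [e]
        ext x; simp only [mem_sdiff, mem_inter_iff]; tauto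
      · refine D.lshape hl (hlc.trans a2) (a4.trans hu) α β j lj ?_
        ext x
        simp only [hu1, Function.update_self, mem_sdiff, mem_Icc, mem_Ioo]
        constructor
        · rintro ⟨⟨h1, h2⟩, h3⟩
          refine ⟨h1, not_lt.1 fun h4 => h3 ⟨h4, h2.trans_lt uc⟩⟩
        · rintro ⟨h1, h2⟩
          exact ⟨⟨h1, h2.trans lc.le⟩, fun h3 => absurd h3.1 (not_lt.2 h2)⟩
      · refine D.lshape (hl.trans a3) (a1.trans huc) hu α β j uj ?_
        ext x
        simp only [hl1, Function.update_self, mem_sdiff, mem_Icc, mem_Ioo]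
        constructor
        · rintro ⟨⟨h1, h2⟩, h3⟩
          refine ⟨not_lt.1 fun h4 => h3 ⟨lc.trans_le h1, h4⟩, h2⟩
        · rintro ⟨h1, h2⟩
          exact ⟨⟨uc.le.trans h1, h2⟩, fun h3 => absurd h3.2 (not_lt.2 h1)⟩
    have h' : ∀ i ∉ s, l1 i = c i ∧ u1 i = c i := by
      intro i hi
      rcases eq_or_ne i j with rfl | hij
      · simp [hl1, hu1]
      · simpa [hl1, hu1, hij] using h i (by simp [hij, hi])
    have h'' : ∀ α β : ι → ℝ, (∀ i ∈ insert j s, l i ≤ α i ∧ β i ≤ u i) →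
        ∀ i ∈ s, l1 i ≤ α i ∧ β i ≤ u1 i := by
      intro α β hlu i hi
      have hij : i ≠ j := by rintro rfl; exact hj hi
      simpa [hl1, hu1, hij] using hlu i (by simp [hi])
    constructor
    · intro α β hc hlu
      obtain ⟨e1, e2, b1, b2, b3, b4⟩ := split α β hc hlu
      have := (ih (n + 1) (by omega) l1 u1 b3 b4 h').1 α β hc (h'' _ _ hlu)
      rw [e2] at this
      rw [e1]
      exact H1_down (D.isOpenW (hcl _ _ _ _)) (D.isOpenW (hcl _ _ _ _)) b1 b2 this
    · intro α β α' β' hc hc' hα hβ hlu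
      obtain ⟨e1, e2, b1, b2, b3, b4⟩ := split α β hc
        (fun i hi => ⟨(hlu i hi).1.trans (hα i), (hβ i).trans (hlu i hi).2⟩)
      obtain ⟨e1', e2', b1', b2', -, -⟩ := split α' β' hc' hlu
      have := (ih (n + 1) (by omega) l1 u1 b3 b4 h').2 α β α' β' hc hc' hα hβ (h'' _ _ hlu)
      rw [e2, e2'] at this
      rw [e1, e1']
      have mono : ∀ l u : ι → ℝ, WK (K0 ∩ g ⁻¹' (Icc l u \ Ob α β)) ⊆
          WK (K0 ∩ g ⁻¹' (Icc l u \ Ob α' β')) := fun l u =>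
        WK_anti (inter_subset_inter_right _ (preimage_mono (sdiff_subset_sdiff_right
          fun x hx i => ⟨(hα i).trans_lt (hx i).1, (hx i).2.trans_le (hβ i)⟩)))
      exact H2_down (D.isOpenW (hcl _ _ _ _)) (D.isOpenW (hcl _ _ _ _)) b1' b2' (mono _ _)
        (mono _ _) this

end cubes
end DA

namespace DA
section emb
variable {E : Type*} [NormedAddCommGroup E] [NormedSpace ℝ E]
variable {ι : Type*} [Fintype ι]

lemma exists_cubeData {e : (ι → ℝ) → E} {lo hi : ι → ℝ} (hc : ContinuousOn e (Icc lo hi))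
    (hi' : InjOn e (Icc lo hi)) : ∃ g, CubeData (e '' Icc lo hi) g lo hi ∧
      ∀ B, e '' Icc lo hi ∩ g ⁻¹' B = e '' (Icc lo hi ∩ B) := by
  let g := Function.invFunOn e (Icc lo hi)
  have hg : ∀ x ∈ Icc lo hi, g (e x) = x := fun x hx => hi'.leftInvOn_invFunOn hx
  have hB : ∀ B, e '' Icc lo hi ∩ g ⁻¹' B = e '' (Icc lo hi ∩ B) := by
    intro B
    ext y
    constructor
    · rintro ⟨⟨x, hx, rfl⟩, h⟩
      exact ⟨x, ⟨hx, by rwa [mem_preimage, hg x hx] at h⟩, rfl⟩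
    · rintro ⟨x, ⟨hx, hxB⟩, rfl⟩
      exact ⟨⟨x, hx, rfl⟩, by rwa [mem_preimage, hg x hx]⟩
  have hcp : IsCompact (Icc lo hi) := isCompact_Icc
  refine ⟨g, ⟨hcp.image_of_continuousOn hc, ?_, ?_⟩, hB⟩
  · rw [continuousOn_iff_isClosed]
    intro t ht
    refine ⟨e '' (Icc lo hi ∩ t), ((hcp.inter_right ht).image_of_continuousOn
      (hc.mono inter_subset_left)).isClosed, ?_⟩
    rw [inter_comm, hB, eq_comm, inter_eq_left]
    exact image_mono inter_subset_left
  · intro x hx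
    refine ⟨e x, ?_⟩
    rw [hB, inter_eq_right.2 (singleton_subset_iff.2 hx), image_singleton]

lemma exists_small_box {e : (ι → ℝ) → E} {lo hi : ι → ℝ} (hc : ContinuousOn e (Icc lo hi))
    {c : ι → ℝ} (hcO : c ∈ Ob lo hi) {O : Set E} (hO : IsOpen O) (hm : e c ∈ O) :
    ∃ α β : ι → ℝ, c ∈ Ob α β ∧ lo ≤ α ∧ β ≤ hi ∧ ∀ x ∈ Icc lo hi, x ∈ Ob α β → e x ∈ O := by
  have hcI : c ∈ Icc lo hi := ⟨fun i => (hcO i).1.le, fun i => (hcO i).2.le⟩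
  have := hc c hcI (hO.mem_nhds hm)
  rw [Filter.mem_map, Metric.mem_nhdsWithin_iff] at this
  obtain ⟨δ, hδ, h⟩ := this
  refine ⟨fun i => max (lo i) (c i - δ), fun i => min (hi i) (c i + δ), fun i => ?_, fun i =>
    le_max_left _ _, fun i => min_le_left _ _, fun x hx hxO => h ⟨?_, hx⟩⟩
  · exact ⟨max_lt (hcO i).1 (by linarith), lt_min (hcO i).2 (by linarith)⟩
  · rw [Metric.mem_ball, dist_pi_lt_iff hδ]
    intro i
    have h1 := (le_max_right _ _).trans_lt (hxO i).1
    have h2 := (hxO i).2.trans_le (min_le_right _ _)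
    rw [Real.dist_eq, abs_lt]; constructor <;> linarith

/-- invariance of dimension -/
lemma no_embed [FiniteDimensional ℝ E] {e : (ι → ℝ) → E} {lo hi : ι → ℝ}
    (hlt : ∀ i, lo i < hi i) (hc : ContinuousOn e (Icc lo hi))
    (hi' : InjOn e (Icc lo hi)) : Fintype.card ι ≤ Module.finrank ℝ E := by
  by_contra hcon
  push Not at hcon
  obtain ⟨s, -, hs⟩ := Finset.exists_subset_card_eq (s := (Finset.univ : Finset ι))
    (n := Module.finrank ℝ E + 1) (by simpa using hcon)
  classical
  obtain ⟨g, D, -⟩ := exists_cubeData hc hi'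
  let c : ι → ℝ := fun i => (lo i + hi i) / 2
  have hcO : c ∈ Ob lo hi := fun i => ⟨by simp only [c]; linarith [hlt i], by simp only [c]; linarith [hlt i]⟩
  obtain ⟨z, hz, hb, hn⟩ := (D.main c s 0 (by omega) (s.piecewise lo c) (s.piecewise hi c)
    (fun i => by by_cases h : i ∈ s <;> simp [h, (hcO i).1.le])
    (fun i => by by_cases h : i ∈ s <;> simp [h, (hcO i).2.le])
    (fun i hi => by simp [hi])).2 lo hi lo hi hcO hcO le_rfl le_rfl (fun i hi => by simp [hi])
  apply hn
  have : ∀ W : Set (E × ℝ), (∃ v : E × ℝ, v ∈ W) → ∀ z ∈ Cn 0 W, Bds 0 W z := by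
    rintro W ⟨v, hv⟩
    apply Cn_induction
    · exact Bds.zero
    · exact fun a b ha hb => ha.add hb
    · intro l hl _
      refine ⟨Finsupp.single [v] 1, single_mem_Cn rfl ?_ 1, ?_⟩
      · simpa [hull] using hv
      · rw [bd_single, List.length_eq_zero_iff.1 hl]; simp [bd0]
  refine this _ ⟨(0, -1), ?_⟩ z hz
  simp [WK]

/-- open cone -/
def OC (U : Set E) : Set (E × ℝ) := {y | 0 < y.2 ∧ y.2⁻¹ • y.1 ∈ U}

lemma isOpen_OC {U : Set E} (hU : IsOpen U) : IsOpen (OC U) := isOpen_coneset hU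

lemma OC_mono {U U' : Set E} (h : U ⊆ U') : OC U ⊆ OC U' := fun _ hy => ⟨hy.1, h hy.2⟩

lemma convex_OC {U : Set E} (hU : Convex ℝ U) : Convex ℝ (OC U) := by
  rintro ⟨u, s⟩ ⟨hs, hu⟩ ⟨u', s'⟩ ⟨hs', hu'⟩ a b ha hb hab
  simp only at hs hu hs' hu'
  have hp : 0 < a * s + b * s' := by
    rcases ha.eq_or_lt with rfl | ha
    · have : b = 1 := by linarith
      subst this; simpa using hs'
    · have := mul_pos ha hs
      have := mul_nonneg hb hs'.le
      linarith
  refine ⟨by simpa using hp, ?_⟩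
  have := hU hu hu' (a := (a * s + b * s')⁻¹ * (a * s)) (b := (a * s + b * s')⁻¹ * (b * s'))
    (by positivity) (by positivity) (by rw [← mul_add, inv_mul_cancel₀ hp.ne'])
  convert this using 1
  simp only [Prod.smul_mk, Prod.mk_add_mk, smul_eq_mul, smul_add, smul_smul]
  congr 2 <;> field_simp

lemma WK_diff (D U : Set E) : WK (D \ U) = OC U ∪ WK D := by
  ext y
  simp only [WK, OC, mem_ofPred_eq, mem_union, mem_sdiff]
  constructor
  · tauto
  · rintro (h | h)
    · refine ⟨fun h0 => ?_, by tauto⟩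
      rw [h0] at h; exact lt_irrefl _ h.1
    · tauto

/-- equivalence of points in `U \ D` -/
def Eqv (U D : Set E) (p q : E) : Prop :=
  Bds 1 (OC U ∩ WK D) (Finsupp.single [((p, 1) : E × ℝ)] 1 + Finsupp.single [((q, 1) : E × ℝ)] 1)

lemma Eqv.symm {U D : Set E} {p q : E} (h : Eqv U D p q) : Eqv U D q p := by
  unfold Eqv at *; rwa [add_comm]

lemma bd_two {V : Type*} (a b : V) : bd (Finsupp.single [a, b] 1) =
    (Finsupp.single [b] 1 + Finsupp.single [a] 1 : Ch V) := by
  simp [bd_single, bd0, cone_single]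

lemma bd_one {V : Type*} (a : V) : bd (Finsupp.single [a] 1) = (Finsupp.single [] 1 : Ch V) := by
  simp [bd_single, bd0]

lemma Eqv.sep {U D S1 S2 : Set E} (h1 : IsOpen S1) (h2 : IsOpen S2) (hd : Disjoint S1 S2)
    (hc : U \ D ⊆ S1 ∪ S2) {p q : E} (hp : p ∈ S1) (h : Eqv U D p q) : q ∈ S1 := by
  classical
  let f : List (E × ℝ) → ZMod 2 := fun l => if ∃ a, l = [a] ∧ a ∈ OC S1 then 1 else 0
  let φ : Ch (E × ℝ) →ₗ[ZMod 2] ZMod 2 := Finsupp.linearCombination (ZMod 2) f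
  have hφ : ∀ a, φ (Finsupp.single [a] 1) = if a ∈ OC S1 then 1 else 0 := by
    intro a
    have : (∃ a', [a] = [a'] ∧ a' ∈ OC S1) ↔ a ∈ OC S1 := by
      constructor
      · rintro ⟨a', h, h'⟩
        rw [List.singleton_inj] at h; rwa [h]
      · exact fun h => ⟨a, rfl, h⟩
    simp only [φ, f, Finsupp.linearCombination_single, one_smul, this]
  have hφ0 : ∀ c ∈ Cn 2 (OC U ∩ WK D), φ (bd c) = 0 := by
    apply Cn_induction
    · simp
    · intro a b ha hb; rw [map_add, map_add, ha, hb, add_zero]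
    · intro l hl hlW
      obtain ⟨a, b, rfl⟩ := List.length_eq_two.1 hl
      rw [bd_two, map_add, hφ, hφ]
      have hsub : hull [a, b] ⊆ OC S1 ∪ OC S2 := by
        intro y hy
        have := hlW hy
        have h3 : y.2⁻¹ • y.1 ∈ U \ D := ⟨this.1.2, fun hh => this.2.2 ⟨this.1.1, hh⟩⟩
        exact (hc h3).imp (fun h => ⟨this.1.1, h⟩) (fun h => ⟨this.1.1, h⟩)
      have hdd : Disjoint (OC S1) (OC S2) :=
        disjoint_left.2 fun y hy hy' => disjoint_left.1 hd hy.2 hy'.2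
      have hpc : IsPreconnected (hull [a, b]) := (convex_hull _).isPreconnected
      have ha : a ∈ hull [a, b] := mem_hull (by simp)
      have hb : b ∈ hull [a, b] := mem_hull (by simp)
      have key : a ∈ OC S1 ↔ b ∈ OC S1 := by
        constructor
        · intro h
          exact hpc.subset_left_of_subset_union (isOpen_OC h1) (isOpen_OC h2) hdd hsub ⟨a, ha, h⟩ hb
        · intro h
          exact hpc.subset_left_of_subset_union (isOpen_OC h1) (isOpen_OC h2) hdd hsub ⟨b, hb, h⟩ ha
      rw [key]
      exact ZModModule.add_self _
  obtain ⟨c, hc2, hcb⟩ := h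
  have := hφ0 c hc2
  rw [hcb, map_add, hφ, hφ] at this
  have hp1 : ((p, 1) : E × ℝ) ∈ OC S1 := by simpa [OC] using hp
  by_contra hq
  have hq1 : ((q, 1) : E × ℝ) ∉ OC S1 := by simpa [OC] using hq
  simp [hp1, hq1] at this

lemma single_one_mem {W : Set (E × ℝ)} {a : E × ℝ} (h : a ∈ W) : Finsupp.single [a] 1 ∈ Cn 1 W :=
  single_mem_Cn rfl (by simpa [hull] using h) 1

lemma bds_ray {U D : Set E} {a : E × ℝ} (ha : a ∈ OC U ∩ WK D) : Bds 1 (OC U ∩ WK D)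
    (Finsupp.single [a] 1 + Finsupp.single [((a.2⁻¹ • a.1, 1) : E × ℝ)] 1) := by
  refine ⟨Finsupp.single [(a.2⁻¹ • a.1, 1), a] 1, single_mem_Cn rfl ?_ 1, bd_two _ _⟩
  have hs := ha.1.1
  have : Convex ℝ (OC ({a.2⁻¹ • a.1} : Set E)) := convex_OC (convex_singleton _)
  refine (hull_subset_of this ?_).trans ?_
  · intro x hx
    simp only [List.mem_cons, List.not_mem_nil, or_false] at hx
    rcases hx with rfl | rfl
    · simp [OC]
    · exact ⟨hs, rfl⟩
  · rintro y ⟨hy, hy'⟩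
    rw [mem_singleton_iff] at hy'
    have h2 : a.2⁻¹ • a.1 ∉ D := fun h => ha.2.2 ⟨hs, h⟩
    refine ⟨⟨hy, hy' ▸ ha.1.2⟩, fun h0 => ?_, fun h => h2 (hy' ▸ h.2)⟩
    rw [h0] at hy; exact lt_irrefl _ hy

lemma bds_of_all_eqv {U Vw D : Set E} (hV : Vw ⊆ U)
    (hall : ∀ p ∈ Vw \ D, ∀ q ∈ Vw \ D, Eqv U D p q) {z : Ch (E × ℝ)}
    (hz : z ∈ Cn 1 (OC Vw ∩ WK D)) (hb : bd z = 0) : Bds 1 (OC U ∩ WK D) z := by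
  rcases (OC Vw ∩ WK D).eq_empty_or_nonempty with he | ⟨y0, hy0⟩
  · rw [he] at hz
    have : ∀ z ∈ Cn 1 (∅ : Set (E × ℝ)), z = 0 := by
      apply Cn_induction
      · rfl
      · rintro a b rfl rfl; simp
      · intro l hl hh
        obtain ⟨a, rfl⟩ := List.length_eq_one_iff.1 hl
        exact (hh (mem_hull (x := a) (by simp))).elim
    rw [this z hz]; exact Bds.zero
  · have sub : OC Vw ∩ WK D ⊆ OC U ∩ WK D := inter_subset_inter_left _ (OC_mono hV)
    have key : ∀ z ∈ Cn 1 (OC Vw ∩ WK D), ∃ r : ZMod 2,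
        Bds 1 (OC U ∩ WK D) (z + r • Finsupp.single [y0] 1) := by
      apply Cn_induction
      · exact ⟨0, by simpa using Bds.zero⟩
      · rintro a b ⟨r, h⟩ ⟨r', h'⟩
        refine ⟨r + r', ?_⟩
        rw [add_smul, add_add_add_comm]; exact h.add h'
      · intro l hl hh
        obtain ⟨a, rfl⟩ := List.length_eq_one_iff.1 hl
        have ha := hh (mem_hull (x := a) (by simp))
        refine ⟨1, ?_⟩
        have k1 := bds_ray (sub ha)
        have k2 := bds_ray (sub hy0)
        have k3 : Eqv U D (a.2⁻¹ • a.1) (y0.2⁻¹ • y0.1) :=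
          hall _ ⟨ha.1.2, fun h => ha.2.2 ⟨ha.1.1, h⟩⟩ _ ⟨hy0.1.2, fun h => hy0.2.2 ⟨hy0.1.1, h⟩⟩
        have := (k1.add k2).add k3
        rw [one_smul]
        unfold Eqv at k3
        have e : ∀ a b c d : Ch (E × ℝ), a + b + (c + d) + (b + d) = a + c := by
          intro a b c d
          rw [show a + b + (c + d) + (b + d) = a + c + (b + b) + (d + d) by abel, ch_add_self,
            ch_add_self, add_zero, add_zero]
        rwa [e] at this
    obtain ⟨r, h⟩ := key z hz
    have : r = 0 := by
      obtain ⟨c, -, hc⟩ := h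
      have h2 := congrArg bd hc
      rw [bd_bd, map_add, hb, map_smul, bd_one, zero_add] at h2
      have := DFunLike.congr_fun h2 []
      simpa using this.symm
    rw [this] at h; simpa using h

/-- local Jordan-Brouwer in Euclidean space -/
theorem ljbE [FiniteDimensional ℝ E] {e : (ι → ℝ) → E} {lo hi : ι → ℝ}
    (hcard : Fintype.card ι + 1 = Module.finrank ℝ E)
    (hc : ContinuousOn e (Icc lo hi)) (hinj : InjOn e (Icc lo hi)) {c : ι → ℝ} (hcO : c ∈ Ob lo hi)
    {r : ℝ} (hr : 0 < r) (hbdry : ∀ x ∈ Icc lo hi, x ∉ Ob lo hi → e x ∉ Metric.ball (e c) r) :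
    ∃ V : Set E, IsOpen V ∧ e c ∈ V ∧ V ⊆ Metric.ball (e c) r ∧
    (e c ∈ closure (e '' Icc lo hi)ᶜ) ∧
    (∀ S1 S2 : Set E, IsOpen S1 → IsOpen S2 → Disjoint S1 S2 → Disjoint S1 (e '' Icc lo hi) →
      Disjoint S2 (e '' Icc lo hi) → Metric.ball (e c) r \ (e '' Icc lo hi) ⊆ S1 ∪ S2 →
      (V ∩ S1).Nonempty → V ∩ (e '' Icc lo hi) ⊆ closure S1) ∧
    (∀ S1 S2 S3 : Set E, IsOpen S1 → IsOpen S2 → IsOpen S3 → Disjoint S1 S2 → Disjoint S1 S3 →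
      Disjoint S2 S3 → Disjoint S1 (e '' Icc lo hi) → Disjoint S2 (e '' Icc lo hi) →
      Disjoint S3 (e '' Icc lo hi) → Metric.ball (e c) r \ (e '' Icc lo hi) ⊆ S1 ∪ S2 ∪ S3 →
      ¬ ((V ∩ S1).Nonempty ∧ (V ∩ S2).Nonempty ∧ (V ∩ S3).Nonempty)) := by
  set U := Metric.ball (e c) r with hU
  have hUo : IsOpen U := Metric.isOpen_ball
  have hcU : e c ∈ U := Metric.mem_ball_self hr
  have hUc : Convex ℝ U := convex_ball _ _
  obtain ⟨g, D, hgB⟩ := exists_cubeData hc hinj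
  set K := e '' Icc lo hi with hK
  have hcI : c ∈ Icc lo hi := ⟨fun i => (hcO i).1.le, fun i => (hcO i).2.le⟩
  have hlh : lo ≤ hi := hcI.1.trans hcI.2
  have hKo : IsOpen (WK K) := isOpen_WK D.compact
  have hKa : Acyc (WK K) := by
    have := D.box le_rfl hlh le_rfl
    rwa [hgB, inter_self] at this
  have hgB' : ∀ α β : ι → ℝ, K ∩ g ⁻¹' (Icc lo hi \ Ob α β) = e '' (Icc lo hi \ Ob α β) := by
    intro α β
    rw [hgB, inter_eq_right.2 sdiff_subset]
  have hUa : Acyc (OC U) := acyc_of_convex (convex_OC hUc) ⟨(e c, 1), by simpa [OC] using hcU⟩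
  -- choose the inner box
  obtain ⟨α, β, hαβ, hα, hβ, hJ⟩ := exists_small_box hc hcO hUo hcU
  have hcomp : IsCompact (e '' (Icc lo hi \ Ob α β)) := by
    rw [← hgB']; exact D.isCompact (isClosed_Icc.sdiff (isOpen_Ob _ _))
  have hnot : e c ∈ U \ e '' (Icc lo hi \ Ob α β) := by
    refine ⟨hcU, ?_⟩
    rintro ⟨x, ⟨hx, hx'⟩, hxe⟩
    exact hx' (hinj hx hcI hxe ▸ hαβ)
  obtain ⟨ρ, hρ, hρV⟩ := Metric.isOpen_iff.1 (hUo.sdiff hcomp.isClosed) _ hnot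
  set V := Metric.ball (e c) ρ with hV
  have hVU : V ⊆ U := fun x hx => (hρV hx).1
  have hVo : IsOpen V := Metric.isOpen_ball
  have hcV : e c ∈ V := Metric.mem_ball_self hρ
  have hVa : Acyc (OC V) := acyc_of_convex (convex_OC (convex_ball _ _))
    ⟨(e c, 1), by simpa [OC] using hcV⟩
  have memW : ∀ p ∈ V \ K, ((p, 1) : E × ℝ) ∈ OC V ∩ WK K := by
    intro p hp
    exact ⟨by simpa [OC] using hp.1, by simp, by simpa using hp.2⟩
  -- (i)
  have stepi : ∀ p ∈ V \ K, ∀ q ∈ V \ K, ∀ w ∈ V \ K, Eqv U K p q ∨ Eqv U K q w ∨ Eqv U K p w := by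
    intro p hp q hq w hw
    have cyc : ∀ p ∈ V \ K, ∀ q ∈ V \ K, ∃ c1 ∈ Cn 2 (OC V), ∃ c2 ∈ Cn 2 (WK K),
        bd c1 = (Finsupp.single [((p, 1) : E × ℝ)] 1 + Finsupp.single [((q, 1) : E × ℝ)] 1) ∧
        bd c2 = (Finsupp.single [((p, 1) : E × ℝ)] 1 + Finsupp.single [((q, 1) : E × ℝ)] 1) := by
      intro p hp q hq
      have hz := add_mem (single_one_mem (memW p hp)) (single_one_mem (memW q hq))
      have hbz : bd (Finsupp.single [((p, 1) : E × ℝ)] 1 + Finsupp.single [((q, 1) : E × ℝ)] 1) = 0 := by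
        rw [map_add, bd_one, bd_one, ch_add_self]
      obtain ⟨c1, h1, h1'⟩ := hVa 1 _ (Cn_mono inter_subset_left hz) hbz
      obtain ⟨c2, h2, h2'⟩ := hKa 1 _ (Cn_mono inter_subset_right hz) hbz
      exact ⟨c1, h1, c2, h2, h1', h2'⟩
    obtain ⟨c1, h1, c2, h2, b1, b2⟩ := cyc p hp q hq
    obtain ⟨c1', h1', c2', h2', b1', b2'⟩ := cyc q hq w hw
    have H := (D.main c Finset.univ 2 (by rw [Finset.card_univ]; omega) lo hi le_rfl le_rfl
      (by simp)).1 α β hαβ (fun i _ => ⟨hα i, hβ i⟩)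
    rw [hgB'] at H
    have sub1 : OC V ∪ WK K ⊆ WK (e '' (Icc lo hi \ Ob α β)) := by
      rw [← WK_diff]
      apply WK_anti
      rintro x hx
      refine ⟨image_mono sdiff_subset hx, fun hxV => (hρV hxV).2 hx⟩
    have sub2 : WK (e '' (Icc lo hi \ Ob α β)) ⊆ OC U ∪ WK K := by
      rw [← WK_diff]
      apply WK_anti
      rintro _ ⟨⟨x, hx, rfl⟩, hxU⟩
      exact ⟨x, ⟨hx, fun hxO => hxU (hJ x hx hxO)⟩, rfl⟩
    have m1 := Cn_mono sub1 (add_mem (Cn_mono (subset_union_left (t := WK K)) h1)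
      (Cn_mono (subset_union_right (s := OC V)) h2))
    have m1' := Cn_mono sub1 (add_mem (Cn_mono (subset_union_left (t := WK K)) h1')
      (Cn_mono (subset_union_right (s := OC V)) h2'))
    rcases H _ m1 _ m1' (by rw [map_add, b1, b2, ch_add_self])
      (by rw [map_add, b1', b2', ch_add_self]) with k | k | k
    · exact Or.inl (mvA (isOpen_OC hUo) hKo (Cn_mono (OC_mono hVU) h1) h2 b1 b2 (k.mono sub2))
    · exact Or.inr (Or.inl (mvA (isOpen_OC hUo) hKo (Cn_mono (OC_mono hVU) h1') h2' b1' b2'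
        (k.mono sub2)))
    · right; right
      rw [add_add_add_comm] at k
      have := mvA (isOpen_OC hUo) hKo (Cn_mono (OC_mono hVU) (add_mem h1 h1'))
        (add_mem h2 h2') (by rw [map_add, b1, b1']) (by rw [map_add, b2, b2']) (k.mono sub2)
      unfold Eqv
      convert this using 1
      rw [add_assoc, ← add_assoc (Finsupp.single [(q, 1)] 1), ch_add_self, zero_add]
  -- (ii)
  have stepii : ∀ w ∈ V ∩ K, ∀ Vw : Set E, IsOpen Vw → w ∈ Vw → Vw ⊆ V →
      ∃ p ∈ Vw \ K, ∃ q ∈ Vw \ K, ¬ Eqv U K p q := by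
    rintro _ ⟨hwV, ⟨w, hwI, rfl⟩⟩ Vw hVwo hwVw hVwV
    by_contra hcon
    push Not at hcon
    have hwO : w ∈ Ob lo hi := by
      by_contra h
      exact hbdry w hwI h (hVU hwV)
    obtain ⟨α', β', hαβ', hα', hβ', hJ'⟩ := exists_small_box hc hwO hVwo hwVw
    obtain ⟨s, hs, hsb, hsn⟩ := (D.main w Finset.univ 2 (by rw [Finset.card_univ]; omega) lo hi
      le_rfl le_rfl (by simp)).2 α' β' lo hi hαβ' hwO hα' hβ' (fun i _ => ⟨le_rfl, le_rfl⟩)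
    apply hsn
    rw [hgB'] at hs ⊢
    have sub1 : WK (e '' (Icc lo hi \ Ob α' β')) ⊆ OC Vw ∪ WK K := by
      rw [← WK_diff]
      apply WK_anti
      rintro _ ⟨⟨x, hx, rfl⟩, hxU⟩
      exact ⟨x, ⟨hx, fun hxO => hxU (hJ' x hx hxO)⟩, rfl⟩
    have sub2 : OC U ∪ WK K ⊆ WK (e '' (Icc lo hi \ Ob lo hi)) := by
      rw [← WK_diff]
      apply WK_anti
      rintro _ ⟨x, ⟨hx, hxO⟩, rfl⟩
      exact ⟨⟨x, hx, rfl⟩, hbdry x hx hxO⟩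
    obtain ⟨s1, hs1, s2, hs2, t, ht, rfl⟩ := mvB (isOpen_OC hVwo) hKo (Cn_mono sub1 hs) hsb
    simp only [map_add, bd_bd, add_zero] at hsb
    have e12 := ch_eq_of_add hsb
    have hz : bd s1 ∈ Cn 1 (OC Vw ∩ WK K) := Cn_inter (bd_mem _ hs1) (e12 ▸ bd_mem _ hs2)
    have := bds_of_all_eqv (hVwV.trans hVU) hcon hz (bd_bd _)
    have := mvC hUa hKa (Cn_mono (OC_mono (hVwV.trans hVU)) hs1) hs2 e12 this
    exact (this.add (Bds.bd (Cn_mono (union_subset_union_left _ (OC_mono (hVwV.trans hVU))) ht))).mono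
      sub2
  refine ⟨V, hVo, hcV, hVU, ?_, ?_, ?_⟩
  · rw [mem_closure_iff]
    intro O hO hwO
    obtain ⟨p', hp', -⟩ := stepii (e c) ⟨hcV, c, hcI, rfl⟩ (O ∩ V) (hO.inter hVo) ⟨hwO, hcV⟩
      inter_subset_right
    exact ⟨p', hp'.1.1, hp'.2⟩
  · rintro S1 S2 h1 h2 hd hd1 hd2 hcov ⟨p, hpV, hpS⟩ w hw
    rw [mem_closure_iff]
    intro O hO hwO
    by_contra hne
    rw [not_nonempty_iff_eq_empty] at hne
    obtain ⟨p', hp', q', hq', hnot⟩ := stepii w hw (O ∩ V) (hO.inter hVo) ⟨hwO, hw.1⟩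
      inter_subset_right
    have hpn : p ∈ V \ K := ⟨hpV, disjoint_left.1 hd1 hpS⟩
    have nS1 : ∀ x ∈ (O ∩ V) \ K, x ∉ S1 := fun x hx hx1 => by
      have : x ∈ O ∩ S1 := ⟨hx.1.1, hx1⟩
      rw [hne] at this; exact this
    rcases stepi p' ⟨hp'.1.2, hp'.2⟩ q' ⟨hq'.1.2, hq'.2⟩ p hpn with k | k | k
    · exact hnot k
    · exact nS1 _ hq' (k.symm.sep h1 h2 hd hcov hpS)
    · exact nS1 _ hp' (k.symm.sep h1 h2 hd hcov hpS)
  · rintro S1 S2 S3 o1 o2 o3 d12 d13 d23 d1 d2 d3 hcov ⟨⟨p, hp, hpS⟩, ⟨q, hq, hqS⟩, ⟨w, hw, hwS⟩⟩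
    rcases stepi p ⟨hp, disjoint_left.1 d1 hpS⟩ q ⟨hq, disjoint_left.1 d2 hqS⟩ w
      ⟨hw, disjoint_left.1 d3 hwS⟩ with k | k | k
    · exact disjoint_left.1 d12 (k.sep o1 (o2.union o3) (disjoint_union_right.2 ⟨d12, d13⟩)
        (by rwa [← union_assoc]) hpS) hqS
    · refine disjoint_left.1 d23 (k.sep o2 (o1.union o3) (disjoint_union_right.2 ⟨d12.symm, d23⟩)
        (hcov.trans ?_) hqS) hwS
      intro x; simp only [mem_union]; tauto
    · exact disjoint_left.1 d13 (k.sep o1 (o2.union o3) (disjoint_union_right.2 ⟨d12, d13⟩)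
        (by rwa [← union_assoc]) hpS) hwS

end emb
end DA

namespace DA
section charts

lemma exists_cube {k : ℕ} {X : Type*} [TopologicalSpace X]
    [ChartedSpace (EuclideanSpace ℝ (Fin k)) X] (x : X) {N : Set X} (hN : IsOpen N) (hx : x ∈ N) :
    ∃ (f : (Fin k → ℝ) → X) (lo hi c : Fin k → ℝ), c ∈ Ob lo hi ∧ ContinuousOn f (Icc lo hi) ∧
      InjOn f (Icc lo hi) ∧ f c = x ∧ f '' Icc lo hi ⊆ N ∧ IsOpen (f '' Ob lo hi) := by
  let φ := chartAt (EuclideanSpace ℝ (Fin k)) x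
  let E := (EuclideanSpace.equiv (Fin k) ℝ).toHomeomorph
  have hxs : x ∈ φ.source := mem_chart_source _ x
  have hM : IsOpen (φ.target ∩ φ.symm ⁻¹' N) :=
    φ.continuousOn_symm.isOpen_inter_preimage φ.open_target hN
  have hM' : IsOpen (E.symm ⁻¹' (φ.target ∩ φ.symm ⁻¹' N)) := hM.preimage E.symm.continuous
  let c := E (φ x)
  have hc : c ∈ E.symm ⁻¹' (φ.target ∩ φ.symm ⁻¹' N) := by
    simp only [mem_preimage, c, E.symm_apply_apply, mem_inter_iff]
    exact ⟨φ.map_source hxs, by rwa [φ.left_inv hxs]⟩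
  obtain ⟨δ, hδ, hb⟩ := Metric.nhds_basis_closedBall.mem_iff.1 (hM'.mem_nhds hc)
  have hsub : Icc (fun i => c i - δ) (fun i => c i + δ) ⊆ E.symm ⁻¹' (φ.target ∩ φ.symm ⁻¹' N) := by
    refine Subset.trans (fun y hy => ?_) hb
    rw [Metric.mem_closedBall, dist_pi_le_iff hδ.le]
    intro i
    have h1 : c i - δ ≤ y i := hy.1 i
    have h2 : y i ≤ c i + δ := hy.2 i
    rw [Real.dist_eq, abs_le]; constructor <;> linarith
  have hOsub : Ob (fun i => c i - δ) (fun i => c i + δ) ⊆ Icc (fun i => c i - δ) (fun i => c i + δ) :=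
    fun y hy => ⟨fun i => (hy i).1.le, fun i => (hy i).2.le⟩
  refine ⟨φ.symm ∘ E.symm, fun i => c i - δ, fun i => c i + δ, c, fun i => ⟨?_, ?_⟩, ?_, ?_, ?_, ?_, ?_⟩
  · simpa using hδ
  · simpa using hδ
  · exact φ.continuousOn_symm.comp E.symm.continuous.continuousOn fun y hy => (hsub hy).1
  · intro y hy y' hy' h
    exact E.symm.injective (φ.symm.injOn (hsub hy).1 (hsub hy').1 h)
  · simp only [Function.comp, c, E.symm_apply_apply]
    exact φ.left_inv hxs
  · rintro _ ⟨y, hy, rfl⟩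
    exact (hsub hy).2
  · rw [image_comp]
    refine φ.isOpen_image_symm_of_subset_target (E.symm.isOpenMap _ (isOpen_Ob _ _)) ?_
    rintro _ ⟨y, hy, rfl⟩
    exact (hsub (hOsub hy)).1

lemma invdim {i d : ℕ} {X Y : Type*} [TopologicalSpace X] [TopologicalSpace Y]
    [ChartedSpace (EuclideanSpace ℝ (Fin i)) X] [ChartedSpace (EuclideanSpace ℝ (Fin d)) Y]
    [Nonempty X] {f : X → Y} (hf : Continuous f) (hinj : Function.Injective f) : i ≤ d := by
  obtain ⟨x⟩ := ‹Nonempty X›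
  let ψ := chartAt (EuclideanSpace ℝ (Fin d)) (f x)
  obtain ⟨h, lo, hi, c, hc, hcont, hin, -, hsub, -⟩ := exists_cube (k := i) x
    (ψ.open_source.preimage hf) (mem_chart_source _ (f x))
  have hs : ∀ y ∈ Icc lo hi, f (h y) ∈ ψ.source := fun y hy => hsub ⟨y, hy, rfl⟩
  have := no_embed (e := fun y => ψ (f (h y))) (lo := lo) (hi := hi)
    (fun j => (hc j).1.trans (hc j).2)
    (ψ.continuousOn.comp (hf.comp_continuousOn hcont) hs)
    (fun y hy y' hy' hh => hin hy hy' (hinj (ψ.injOn (hs y hy) (hs y' hy') hh)))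
  simpa using this

/-- local separation property of `Q` in `X` -/
def LJB {X : Type*} [TopologicalSpace X] (Q : Set X) : Prop :=
  ∀ x ∈ Q, x ∈ closure Qᶜ ∧ ∀ U0 : Set X, IsOpen U0 → x ∈ U0 → ∃ V : Set X, IsOpen V ∧ x ∈ V ∧ V ⊆ U0 ∧
    (∀ S1 S2 : Set X, IsOpen S1 → IsOpen S2 → Disjoint S1 S2 → Disjoint S1 Q →
      Disjoint S2 Q → U0 \ Q ⊆ S1 ∪ S2 → (V ∩ S1).Nonempty → V ∩ Q ⊆ closure S1) ∧
    (∀ S1 S2 S3 : Set X, IsOpen S1 → IsOpen S2 → IsOpen S3 → Disjoint S1 S2 → Disjoint S1 S3 →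
      Disjoint S2 S3 → Disjoint S1 Q → Disjoint S2 Q → Disjoint S3 Q → U0 \ Q ⊆ S1 ∪ S2 ∪ S3 →
      ¬ ((V ∩ S1).Nonempty ∧ (V ∩ S2).Nonempty ∧ (V ∩ S3).Nonempty))

theorem ljb {k d : ℕ} (hkd : k + 1 = d) {X Q' : Type*} [TopologicalSpace X] [TopologicalSpace Q']
    [ChartedSpace (EuclideanSpace ℝ (Fin d)) X] [ChartedSpace (EuclideanSpace ℝ (Fin k)) Q']
    {j : Q' → X} (hj : Topology.IsEmbedding j) : LJB (range j) := by
  suffices H : ∀ x ∈ range j, ∀ U0 : Set X, IsOpen U0 → x ∈ U0 → x ∈ closure (range j)ᶜ ∧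
      ∃ V : Set X, IsOpen V ∧ x ∈ V ∧ V ⊆ U0 ∧ _ from
    fun x hx => ⟨(H x hx univ isOpen_univ trivial).1, fun U0 h h' => (H x hx U0 h h').2⟩
  rintro _ ⟨x, rfl⟩ U0 hU0 hx0
  let ψ := chartAt (EuclideanSpace ℝ (Fin d)) (j x)
  have hxs : j x ∈ ψ.source := mem_chart_source _ (j x)
  obtain ⟨h, lo, hi, c, hc, hcont, hin, hhc, hsub, hop⟩ := exists_cube (k := k) x
    ((ψ.open_source.inter hU0).preimage hj.continuous) ⟨hxs, hx0⟩
  have hs : ∀ y ∈ Icc lo hi, j (h y) ∈ ψ.source := fun y hy => (hsub ⟨y, hy, rfl⟩).1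
  obtain ⟨O, hO, hOe⟩ := hj.isInducing.isOpen_iff.1 hop
  let e := fun y => ψ (j (h y))
  have hec : e c = ψ (j x) := by simp only [e, hhc]
  have hOsub : Ob lo hi ⊆ Icc lo hi :=
    fun y hy => ⟨fun i => (hy i).1.le, fun i => (hy i).2.le⟩
  have hM : IsOpen (ψ.target ∩ ψ.symm ⁻¹' (U0 ∩ O)) :=
    ψ.continuousOn_symm.isOpen_inter_preimage ψ.open_target (hU0.inter hO)
  have hjxO : j x ∈ O := by
    have : x ∈ j ⁻¹' O := by rw [hOe]; exact ⟨c, hc, hhc⟩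
    exact this
  have hxM : e c ∈ ψ.target ∩ ψ.symm ⁻¹' (U0 ∩ O) := by
    rw [hec]
    refine ⟨ψ.map_source hxs, ?_⟩
    rw [mem_preimage, ψ.left_inv hxs]; exact ⟨hx0, hjxO⟩
  obtain ⟨r, hr, hrM⟩ := Metric.isOpen_iff.1 hM _ hxM
  set U := Metric.ball (e c) r with hU
  have hUQ : ∀ u ∈ U, (ψ.symm u ∈ range j ↔ u ∈ e '' Icc lo hi) := by
    intro u hu
    constructor
    · rintro ⟨q, hq⟩
      have : q ∈ j ⁻¹' O := by rw [mem_preimage, hq]; exact (hrM hu).2.2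
      rw [hOe] at this
      obtain ⟨y, hy, rfl⟩ := this
      exact ⟨y, hOsub hy, by simp only [e, hq]; exact ψ.right_inv (hrM hu).1⟩
    · rintro ⟨y, hy, rfl⟩
      exact ⟨h y, by simp only [e]; rw [ψ.left_inv (hs y hy)]⟩
  obtain ⟨V, hVo, hcV, hVU, h0, hA, hB⟩ := ljbE (e := e) (lo := lo) (hi := hi)
    (by simpa using hkd)
    (ψ.continuousOn.comp (hj.continuous.comp_continuousOn hcont) hs)
    (fun y hy y' hy' hh => hin hy hy' (hj.injective (ψ.injOn (hs y hy) (hs y' hy') hh))) hc hr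
    (fun y hy hyO hyU => by
      have h1 : ψ.symm (e y) = j (h y) := ψ.left_inv (hs y hy)
      have : h y ∈ j ⁻¹' O := by rw [mem_preimage, ← h1]; exact (hrM hyU).2.2
      rw [hOe] at this
      obtain ⟨y', hy', hyy⟩ := this
      exact hyO (hin (hOsub hy') hy hyy ▸ hy'))
  have hxx : ψ.symm (e c) = j x := by rw [hec]; exact ψ.left_inv hxs
  have hcl : ∀ (S : Set X) (S' : Set (EuclideanSpace ℝ (Fin d))),
      (∀ u ∈ U, u ∈ S' → ψ.symm u ∈ S) → ∀ u ∈ U, u ∈ closure S' → ψ.symm u ∈ closure S := by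
    intro S S' hSS u hu huc
    rw [mem_closure_iff_nhds] at huc ⊢
    intro N hN
    have := (ψ.continuousAt_symm (hrM hu).1) hN
    obtain ⟨w, ⟨hw1, hw2⟩, hw3⟩ := huc _ (Filter.inter_mem this (Metric.isOpen_ball.mem_nhds hu))
    exact ⟨_, hw1, hSS w hw2 hw3⟩
  have hoS : ∀ S : Set X, IsOpen S → IsOpen (U ∩ ψ.symm ⁻¹' S) := fun S hS =>
    (ψ.continuousOn_symm.mono fun u hu => (hrM hu).1).isOpen_inter_preimage Metric.isOpen_ball hS
  have hdQ : ∀ S : Set X, Disjoint S (range j) → Disjoint (U ∩ ψ.symm ⁻¹' S) (e '' Icc lo hi) :=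
    fun S hS => disjoint_left.2 fun u hu hu' => disjoint_left.1 hS hu.2 ((hUQ u hu.1).2 hu')
  have hdd : ∀ S S' : Set X, Disjoint S S' → Disjoint (U ∩ ψ.symm ⁻¹' S) (U ∩ ψ.symm ⁻¹' S') :=
    fun S S' hS => disjoint_left.2 fun u hu hu' => disjoint_left.1 hS hu.2 hu'.2
  have hVS : ∀ S : Set X, ((ψ.source ∩ ψ ⁻¹' V) ∩ S).Nonempty → (V ∩ (U ∩ ψ.symm ⁻¹' S)).Nonempty := by
    rintro S ⟨y, ⟨hy1, hy2⟩, hy3⟩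
    refine ⟨ψ y, hy2, hVU hy2, ?_⟩
    rw [mem_preimage, ψ.left_inv hy1]; exact hy3
  refine ⟨?_, ψ.source ∩ ψ ⁻¹' V, ψ.continuousOn.isOpen_inter_preimage ψ.open_source hVo,
    ⟨hxs, ?_⟩, ?_, ?_, ?_⟩
  · rw [← hxx]
    refine hcl _ _ (fun u hu hu' => ?_) _ (Metric.mem_ball_self hr) h0
    rw [mem_compl_iff, hUQ u hu]; exact hu'
  · rw [mem_preimage, ← hec]; exact hcV
  · rintro y ⟨hy1, hy2⟩
    have := (hrM (hVU hy2)).2.1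
    rwa [ψ.left_inv hy1] at this
  · intro S1 S2 o1 o2 d12 d1 d2 hcov hne y hy
    have := hA _ _ (hoS S1 o1) (hoS S2 o2) (hdd _ _ d12) (hdQ _ d1) (hdQ _ d2) ?_ (hVS _ hne)
    · have h3 := hcl S1 _ (fun u _ hu' => hu'.2) (ψ y) (hVU hy.1.2)
        (this ⟨hy.1.2, (hUQ _ (hVU hy.1.2)).1 (by rw [ψ.left_inv hy.1.1]; exact hy.2)⟩)
      rwa [ψ.left_inv hy.1.1] at h3
    · rintro u ⟨hu, hu'⟩
      rw [← hUQ u hu] at hu'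
      exact (hcov ⟨(hrM hu).2.1, hu'⟩).imp (fun h => ⟨hu, h⟩) (fun h => ⟨hu, h⟩)
  · rintro S1 S2 S3 o1 o2 o3 d12 d13 d23 d1 d2 d3 hcov ⟨n1, n2, n3⟩
    refine hB _ _ _ (hoS S1 o1) (hoS S2 o2) (hoS S3 o3) (hdd _ _ d12) (hdd _ _ d13) (hdd _ _ d23)
      (hdQ _ d1) (hdQ _ d2) (hdQ _ d3) ?_ ⟨hVS _ n1, hVS _ n2, hVS _ n3⟩
    rintro u ⟨hu, hu'⟩
    rw [← hUQ u hu] at hu'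
    exact (hcov ⟨(hrM hu).2.1, hu'⟩).imp (fun h => h.imp (fun h => ⟨hu, h⟩) (fun h => ⟨hu, h⟩))
      (fun h => ⟨hu, h⟩)

end charts

section conn
variable {X : Type*} [TopologicalSpace X]

lemma ts {Q Sp Sm : Set X} [PreconnectedSpace X] (hL : LJB Q) (hQ : IsPreconnected Q)
    (op : IsOpen Sp) (om : IsOpen Sm) (hd : Disjoint Sp Sm) (hdp : Disjoint Sp Q)
    (hdm : Disjoint Sm Q) (hU : Qᶜ ⊆ Sp ∪ Sm) (np : Sp.Nonempty) (nm : Sm.Nonempty) :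
    Q ⊆ closure Sp ∩ closure Sm := by
  have hcov : ∀ x, x ∈ closure Sp ∪ closure Sm := by
    intro x
    by_cases hx : x ∈ Q
    · have := closure_mono hU (hL x hx).1
      rwa [closure_union] at this
    · exact (hU hx).imp (fun h => subset_closure h) (fun h => subset_closure h)
  obtain ⟨x0, -, hx0p, hx0m⟩ := isPreconnected_closed_iff.1 (isPreconnected_univ (α := X)) _ _
    isClosed_closure isClosed_closure (fun x _ => hcov x) (np.closure.mono (by simp))
    (nm.closure.mono (by simp))
  have hx0 : x0 ∈ Q := by
    by_contra h
    rcases hU h with h | h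
    · exact disjoint_left.1 (hd.closure_right op) h hx0m
    · exact disjoint_left.1 (hd.closure_left om) hx0p h
  have hV : ∀ x ∈ Q ∩ (closure Sp ∩ closure Sm), ∃ V, IsOpen V ∧ x ∈ V ∧ V ∩ Q ⊆ closure Sp ∩ closure Sm := by
    rintro x ⟨hx, hxp, hxm⟩
    obtain ⟨V, hVo, hxV, -, hA, -⟩ := (hL x hx).2 univ isOpen_univ trivial
    refine ⟨V, hVo, hxV, subset_inter ?_ ?_⟩
    · exact hA Sp Sm op om hd hdp hdm (fun y hy => hU hy.2) (mem_closure_iff.1 hxp V hVo hxV)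
    · exact hA Sm Sp om op hd.symm hdm hdp (fun y hy => (hU hy.2).symm)
        (mem_closure_iff.1 hxm V hVo hxV)
  choose! V hVo hxV hVQ using hV
  have := isPreconnected_iff_subset_of_disjoint.1 hQ
    (⋃ x ∈ Q ∩ (closure Sp ∩ closure Sm), V x) (closure Sp ∩ closure Sm)ᶜ
    (isOpen_biUnion hVo) (isClosed_closure.inter isClosed_closure).isOpen_compl ?_ ?_
  · rcases this with h | h
    · intro x hx
      obtain ⟨y, hy, hxy⟩ := mem_iUnion₂.1 (h hx)
      exact hVQ y hy ⟨hxy, hx⟩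
    · exact absurd ⟨hx0p, hx0m⟩ (h hx0)
  · intro x hx
    by_cases h : x ∈ closure Sp ∩ closure Sm
    · exact Or.inl (mem_iUnion₂.2 ⟨x, ⟨hx, h⟩, hxV x ⟨hx, h⟩⟩)
    · exact Or.inr h
  · rw [eq_empty_iff_forall_notMem]
    rintro x ⟨hx, hx1, hx2⟩
    obtain ⟨y, hy, hxy⟩ := mem_iUnion₂.1 hx1
    exact hx2 (hVQ y hy ⟨hxy, hx⟩)

lemma conn {Q Sp Sm C : Set X} (hL : LJB Q)
    (op : IsOpen Sp) (om : IsOpen Sm) (hd : Disjoint Sp Sm) (hdp : Disjoint Sp Q)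
    (hdm : Disjoint Sm Q) (hU : Qᶜ ⊆ Sp ∪ Sm) (hcl : Q ⊆ closure Sp ∩ closure Sm)
    (hC : IsPreconnected C) (hCo : IsOpen C) (hCQ : IsPreconnected (C ∩ Q)) :
    IsPreconnected (C ∩ Sp) := by
  rw [isPreconnected_iff_subset_of_disjoint]
  intro u v hu hv huv hdis
  by_contra hcon
  push Not at hcon
  set A := C ∩ Sp ∩ u with hA
  set B := C ∩ Sp ∩ v with hB
  have dAB : Disjoint A B := disjoint_left.2 fun x hx hx' => by
    have : x ∈ C ∩ Sp ∩ (u ∩ v) := ⟨hx.1, hx.2, hx'.2⟩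
    rw [hdis] at this; exact this
  have nA : A.Nonempty := by
    obtain ⟨x, hx, hxv⟩ := not_subset.1 hcon.2
    exact ⟨x, hx, (huv hx).resolve_right hxv⟩
  have nB : B.Nonempty := by
    obtain ⟨x, hx, hxv⟩ := not_subset.1 hcon.1
    exact ⟨x, hx, (huv hx).resolve_left hxv⟩
  have oA : IsOpen A := (hCo.inter op).inter hu
  have oB : IsOpen B := (hCo.inter op).inter hv
  have oM : IsOpen (C ∩ Sm) := hCo.inter om
  have dAM : Disjoint A (C ∩ Sm) := disjoint_left.2 fun x hx hx' => disjoint_left.1 hd hx.1.2 hx'.2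
  have dBM : Disjoint B (C ∩ Sm) := disjoint_left.2 fun x hx hx' => disjoint_left.1 hd hx.1.2 hx'.2
  have dAQ : Disjoint A Q := disjoint_left.2 fun x hx hx' => disjoint_left.1 hdp hx.1.2 hx'
  have dBQ : Disjoint B Q := disjoint_left.2 fun x hx hx' => disjoint_left.1 hdp hx.1.2 hx'
  have dMQ : Disjoint (C ∩ Sm) Q := disjoint_left.2 fun x hx hx' => disjoint_left.1 hdm hx.2 hx'
  have hcov : C \ Q ⊆ A ∪ B ∪ C ∩ Sm := by
    rintro x ⟨hx, hxQ⟩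
    rcases hU hxQ with h | h
    · left
      exact (huv ⟨hx, h⟩).imp (fun h' => ⟨⟨hx, h⟩, h'⟩) (fun h' => ⟨⟨hx, h⟩, h'⟩)
    · exact Or.inr ⟨hx, h⟩
  have hV : ∀ x ∈ C ∩ Q, ∃ V, IsOpen V ∧ x ∈ V ∧ ((V ∩ Q ⊆ closure A ∧ x ∉ closure B) ∨
      (V ∩ Q ⊆ closure B ∧ x ∉ closure A)) := by
    rintro x ⟨hxC, hxQ⟩
    obtain ⟨V, hVo, hxV, hVC, h1, h2⟩ := (hL x hxQ).2 C hCo hxC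
    refine ⟨V, hVo, hxV, ?_⟩
    have hm : (V ∩ (C ∩ Sm)).Nonempty := by
      obtain ⟨y, hy, hy'⟩ := mem_closure_iff.1 (hcl hxQ).2 V hVo hxV
      exact ⟨y, hy, hVC hy, hy'⟩
    have hp : (V ∩ A).Nonempty ∨ (V ∩ B).Nonempty := by
      obtain ⟨y, hy, hy'⟩ := mem_closure_iff.1 (hcl hxQ).1 V hVo hxV
      exact (huv ⟨hVC hy, hy'⟩).imp (fun h => ⟨y, hy, ⟨hVC hy, hy'⟩, h⟩)
        (fun h => ⟨y, hy, ⟨hVC hy, hy'⟩, h⟩)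
    have hnot := h2 A B (C ∩ Sm) oA oB oM dAB dAM dBM dAQ dBQ dMQ hcov
    rcases hp with hp | hp
    · left
      refine ⟨h1 A (B ∪ C ∩ Sm) oA (oB.union oM) (disjoint_union_right.2 ⟨dAB, dAM⟩) dAQ
        (disjoint_union_left.2 ⟨dBQ, dMQ⟩) (by rwa [← union_assoc]) hp, fun h => hnot ⟨hp, ?_, hm⟩⟩
      exact mem_closure_iff.1 h V hVo hxV
    · right
      refine ⟨h1 B (A ∪ C ∩ Sm) oB (oA.union oM) (disjoint_union_right.2 ⟨dAB.symm, dBM⟩) dBQ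
        (disjoint_union_left.2 ⟨dAQ, dMQ⟩) (hcov.trans ?_) hp, fun h => hnot ⟨?_, hp, hm⟩⟩
      · intro y; simp only [mem_union]; tauto
      · exact mem_closure_iff.1 h V hVo hxV
  have fin : ∀ A B : Set X, IsOpen A → IsOpen B → Disjoint A B → Disjoint B (C ∩ Sm) →
      A.Nonempty → B.Nonempty → A ⊆ C → B ⊆ C → C \ Q ⊆ A ∪ B ∪ C ∩ Sm →
      (∀ x ∈ C ∩ Q, x ∉ closure B) → False := by
    intro A B oA oB dAB dBM nA nB hAC hBC hcov hn
    have := isPreconnected_iff_subset_of_disjoint.1 hC B (closure B)ᶜ oB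
      isClosed_closure.isOpen_compl ?_ ?_
    · rcases this with h | h
      · obtain ⟨a, ha⟩ := nA
        exact disjoint_left.1 dAB ha (h (hAC ha))
      · obtain ⟨b, hb⟩ := nB
        exact h (hBC hb) (subset_closure hb)
    · intro x hx
      by_cases hxB : x ∈ closure B
      · left
        have hxQ : x ∉ Q := fun h => hn x ⟨hx, h⟩ hxB
        rcases hcov ⟨hx, hxQ⟩ with (h | h) | h
        · exact absurd hxB (disjoint_left.1 (dAB.closure_right oA) h)
        · exact h
        · exact absurd hxB (disjoint_left.1 (dBM.symm.closure_right oM) h)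
      · exact Or.inr hxB
    · rw [eq_empty_iff_forall_notMem]
      rintro x ⟨-, h1, h2⟩
      exact h2 (subset_closure h1)
  choose! V hVo hxV hVAB using hV
  have := isPreconnected_iff_subset_of_disjoint.1 hCQ
    (⋃ x ∈ {x ∈ C ∩ Q | x ∉ closure B}, V x) (⋃ x ∈ {x ∈ C ∩ Q | x ∉ closure A}, V x)
    (isOpen_biUnion fun x hx => hVo x hx.1) (isOpen_biUnion fun x hx => hVo x hx.1) ?_ ?_
  · have mem1 : ∀ x ∈ C ∩ Q, x ∉ closure B → V x ∩ Q ⊆ closure A := by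
      intro x hx hxB
      rcases hVAB x hx with h | h
      · exact h.1
      · exact absurd (h.1 ⟨hxV x hx, hx.2⟩) hxB
    have mem2 : ∀ x ∈ C ∩ Q, x ∉ closure A → V x ∩ Q ⊆ closure B := by
      intro x hx hxB
      rcases hVAB x hx with h | h
      · exact absurd (h.1 ⟨hxV x hx, hx.2⟩) hxB
      · exact h.1
    rcases this with h | h
    · refine fin A B oA oB dAB dBM nA nB (fun x hx => hx.1.1) (fun x hx => hx.1.1) hcov ?_
      intro x hx hxB
      obtain ⟨y, hy, hxy⟩ := mem_iUnion₂.1 (h hx)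
      have hxA := mem1 y hy.1 hy.2 ⟨hxy, hx.2⟩
      rcases hVAB x hx with k | k
      · exact k.2 hxB
      · exact k.2 hxA
    · refine fin B A oB oA dAB.symm dAM nB nA (fun x hx => hx.1.1) (fun x hx => hx.1.1)
        (hcov.trans ?_) ?_
      · intro y; simp only [mem_union]; tauto
      intro x hx hxA
      obtain ⟨y, hy, hxy⟩ := mem_iUnion₂.1 (h hx)
      have hxB := mem2 y hy.1 hy.2 ⟨hxy, hx.2⟩
      rcases hVAB x hx with k | k
      · exact k.2 hxB
      · exact k.2 hxA
  · intro x hx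
    rcases hVAB x hx with h | h
    · exact Or.inl (mem_iUnion₂.2 ⟨x, ⟨hx, h.2⟩, hxV x hx⟩)
    · exact Or.inr (mem_iUnion₂.2 ⟨x, ⟨hx, h.2⟩, hxV x hx⟩)
  · rw [eq_empty_iff_forall_notMem]
    rintro x ⟨hx, h1, h2⟩
    obtain ⟨y, hy, hxy⟩ := mem_iUnion₂.1 h1
    obtain ⟨y', hy', hxy'⟩ := mem_iUnion₂.1 h2
    have kA : x ∈ closure A := by
      rcases hVAB y hy.1 with h | h
      · exact h.1 ⟨hxy, hx.2⟩
      · exact absurd (h.1 ⟨hxV y hy.1, hy.1.2⟩) hy.2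
    have kB : x ∈ closure B := by
      rcases hVAB y' hy'.1 with h | h
      · exact absurd (h.1 ⟨hxV y' hy'.1, hy'.1.2⟩) hy'.2
      · exact h.1 ⟨hxy', hx.2⟩
    rcases hVAB x hx with k | k
    · exact k.2 kB
    · exact k.2 kA

end conn
end DA

namespace DA
section arr

lemma IsSimanifold.isPreconnected {N d : ℕ} {S : Set (Euc N)} (h : IsSimanifold d S) :
    IsPreconnected S := by
  obtain ⟨-, h2, -⟩ := h
  exact isPreconnected_iff_preconnectedSpace.2 inferInstance

lemma ambConn {N k d : ℕ} (hkd : k + 1 = d) {Y Q Sp Sm C : Set (Euc N)} (hY : IsSimanifold d Y)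
    (hQ : IsSimanifold k Q) (hQY : Q ⊆ Y) (hcov : Y ⊆ Sp ∪ Q ∪ Sm)
    (dp : Disjoint Sp Q) (dm : Disjoint Sm Q) (dpm : Disjoint Sp Sm)
    (op : ∃ O, IsOpen O ∧ Sp = Y ∩ O) (om : ∃ O, IsOpen O ∧ Sm = Y ∩ O)
    (np : Sp.Nonempty) (nm : Sm.Nonempty) (oC : ∃ O, IsOpen O ∧ C = Y ∩ O)
    (hC : IsPreconnected C) (hCQ : IsPreconnected (C ∩ Q)) :
    IsPreconnected (C ∩ Sp) ∧ IsPreconnected (C ∩ Sm) ∧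
      ((C ∩ Q).Nonempty → (C ∩ Sp).Nonempty ∧ (C ∩ Sm).Nonempty) := by
  obtain ⟨-, hY2, ⟨hY3⟩⟩ := hY
  have hQ1 := IsSimanifold.isPreconnected hQ
  obtain ⟨-, hQ2, ⟨hQ3⟩⟩ := hQ
  have hL : LJB (Subtype.val ⁻¹' Q : Set Y) := by
    have := ljb hkd (Topology.IsEmbedding.inclusion hQY)
    rwa [range_inclusion] at this
  have open' : ∀ S : Set (Euc N), (∃ O, IsOpen O ∧ S = Y ∩ O) →
      IsOpen (Subtype.val ⁻¹' S : Set Y) := by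
    rintro S ⟨O, hO, rfl⟩
    rw [preimage_inter, Subtype.coe_preimage_self, univ_inter]
    exact hO.preimage continuous_subtype_val
  have pc : ∀ S : Set (Euc N), S ⊆ Y → (IsPreconnected (Subtype.val ⁻¹' S : Set Y) ↔
      IsPreconnected S) := by
    intro S hS
    rw [← Topology.IsInducing.subtypeVal.isPreconnected_image, Subtype.image_preimage_coe,
      inter_eq_right.2 hS]
  have dd : ∀ S S' : Set (Euc N), Disjoint S S' →
      Disjoint (Subtype.val ⁻¹' S : Set Y) (Subtype.val ⁻¹' S') := fun S S' h => h.preimage _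
  have sub' : ∀ S : Set (Euc N), (∃ O, IsOpen O ∧ S = Y ∩ O) → S ⊆ Y := by
    rintro S ⟨O, hO, rfl⟩; exact inter_subset_left
  have ne' : ∀ S : Set (Euc N), S ⊆ Y → S.Nonempty → (Subtype.val ⁻¹' S : Set Y).Nonempty := by
    rintro S hS ⟨x, hx⟩; exact ⟨⟨x, hS hx⟩, hx⟩
  have hU : (Subtype.val ⁻¹' Q : Set Y)ᶜ ⊆ Subtype.val ⁻¹' Sp ∪ Subtype.val ⁻¹' Sm := by
    intro x hx
    rcases hcov x.2 with (h | h) | h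
    · exact Or.inl h
    · exact absurd h hx
    · exact Or.inr h
  have T := ts hL ((pc Q hQY).2 hQ1) (open' _ op) (open' _ om) (dd _ _ dpm) (dd _ _ dp) (dd _ _ dm) hU
    (ne' _ (sub' _ op) np) (ne' _ (sub' _ om) nm)
  have hCY := sub' _ oC
  refine ⟨?_, ?_, ?_⟩
  · rw [← pc _ (inter_subset_left.trans hCY)]
    exact conn hL (open' _ op) (open' _ om) (dd _ _ dpm) (dd _ _ dp) (dd _ _ dm) hU T
      ((pc C hCY).2 hC) (open' _ oC) ((pc (C ∩ Q) (inter_subset_left.trans hCY)).2 hCQ)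
  · rw [← pc _ (inter_subset_left.trans hCY)]
    have hU' : (Subtype.val ⁻¹' Q : Set Y)ᶜ ⊆ Subtype.val ⁻¹' Sm ∪ Subtype.val ⁻¹' Sp :=
      fun x hx => (hU hx).symm
    exact conn hL (open' _ om) (open' _ op) (dd _ _ dpm.symm) (dd _ _ dm) (dd _ _ dp)
      hU' (fun x hx => ⟨(T hx).2, (T hx).1⟩)
      ((pc C hCY).2 hC) (open' _ oC) ((pc (C ∩ Q) (inter_subset_left.trans hCY)).2 hCQ)
  · rintro ⟨x, hxC, hxQ⟩
    have hx := T (a := ⟨x, hCY hxC⟩) hxQ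
    obtain ⟨y, hy, hy'⟩ := mem_closure_iff.1 hx.1 _ (open' _ oC) hxC
    obtain ⟨z, hz, hz'⟩ := mem_closure_iff.1 hx.2 _ (open' _ oC) hxC
    exact ⟨⟨y, hy, hy'⟩, ⟨z, hz, hz'⟩⟩

lemma IsSimanifold.le {N i d : ℕ} {S S' : Set (Euc N)} (h : IsSimanifold i S)
    (h' : IsSimanifold d S') (hs : S ⊆ S') : i ≤ d := by
  obtain ⟨h1, -, ⟨h2⟩⟩ := h
  obtain ⟨-, -, ⟨h3⟩⟩ := h'
  have : Nonempty S := h1.to_subtype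
  exact invdim (continuous_inclusion hs) (inclusion_injective hs)

lemma IsSimanifold.sdim_eq {N d : ℕ} {S : Set (Euc N)} (h : IsSimanifold d S) : sdim S = d := by
  refine IsGreatest.csSup_eq ⟨⟨S, h, Subset.rfl⟩, ?_⟩
  rintro i ⟨S', h1, h2⟩
  exact IsSimanifold.le h1 h h2

lemma IsSimanifold.le_of_open {N i d : ℕ} {S S' O : Set (Euc N)} (h : IsSimanifold i S)
    (h' : IsSimanifold d S') (hO : IsOpen O) (hs : S = S' ∩ O) : d ≤ i := by
  obtain ⟨h1, -, ⟨h2⟩⟩ := h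
  obtain ⟨-, -, ⟨h3⟩⟩ := h'
  let U : TopologicalSpace.Opens S' := ⟨Subtype.val ⁻¹' O, hO.preimage continuous_subtype_val⟩
  have : Nonempty U := by
    obtain ⟨x, hx⟩ := h1
    rw [hs] at hx
    exact ⟨⟨⟨x, hx.1⟩, hx.2⟩⟩
  let f : U → S := fun u => ⟨u.1.1, by rw [hs]; exact ⟨u.1.2, u.2⟩⟩
  refine invdim (f := f) (by fun_prop) ?_
  intro u v huv
  have := congrArg (fun s : S => (s : Euc N)) huv
  exact Subtype.ext (Subtype.ext this)

variable {N n : ℕ} {T : Set (Euc N)}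

lemma P_sub (P : Dehyperplane N n T) : P.P ⊆ T :=
  fun _ hx => P.union_eq.subset (Or.inl (Or.inr hx))

lemma plus_eq (P : Dehyperplane N n T) : P.plus = T ∩ (closure P.minus)ᶜ := by
  ext x
  constructor
  · intro hx
    refine ⟨by rw [← P.union_eq]; exact Or.inl (Or.inl hx), fun h => ?_⟩
    have : x ∈ P.P := by rw [← P.closure_eq]; exact ⟨subset_closure hx, h⟩
    exact disjoint_left.1 P.disj_pP hx this
  · rintro ⟨hx, hx'⟩
    rw [← P.union_eq] at hx
    rcases hx with (h | h) | h
    · exact h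
    · rw [← P.closure_eq] at h; exact absurd h.2 hx'
    · exact absurd (subset_closure h) hx'

lemma minus_eq (P : Dehyperplane N n T) : P.minus = T ∩ (closure P.plus)ᶜ := by
  ext x
  constructor
  · intro hx
    refine ⟨by rw [← P.union_eq]; exact Or.inr hx, fun h => ?_⟩
    have : x ∈ P.P := by rw [← P.closure_eq]; exact ⟨h, subset_closure hx⟩
    exact disjoint_left.1 P.disj_Pm this hx
  · rintro ⟨hx, hx'⟩
    rw [← P.union_eq] at hx
    rcases hx with (h | h) | h
    · exact absurd (subset_closure h) hx'
    · rw [← P.closure_eq] at h; exact absurd h.1 hx'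
    · exact h

variable {A : Set (Dehyperplane N n T)}

lemma flat_sub {X : Set (Euc N)} (h : X ∈ flats A) : X ⊆ T := by
  obtain ⟨-, B, -, rfl⟩ := h; exact inter_subset_left

lemma flat_inter {X Y : Set (Euc N)} (h : X ∈ flats A) (h' : Y ∈ flats A) (hne : (X ∩ Y).Nonempty) :
    X ∩ Y ∈ flats A := by
  obtain ⟨-, B, hB, rfl⟩ := h
  obtain ⟨-, B', hB', rfl⟩ := h'
  refine ⟨hne, B ∪ B', union_subset hB hB', ?_⟩
  rw [biInter_union]; ext x; simp only [mem_inter_iff]; tauto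

lemma flat_P {P : Dehyperplane N n T} (h : P ∈ A) : P.P ∈ flats A := by
  refine ⟨P.simP.1, {P}, by simpa using h, ?_⟩
  rw [biInter_singleton, inter_eq_right.2 (P_sub P)]

lemma flat_T (hT : IsSimanifold n T) : T ∈ flats A := ⟨hT.1, ∅, by simp, by simp⟩

lemma flat_sim (hT : IsSimanifold n T) (hA : IsDA n T A) {X : Set (Euc N)} (hX : X ∈ flats A) :
    ∃ d ≤ n, IsSimanifold d X := by
  obtain ⟨hne, B, hB, rfl⟩ := hX
  have hfin : B.Finite := hA.1.subset hB
  induction B, hfin using Set.Finite.induction_on with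
  | empty => exact ⟨n, le_rfl, by simpa using hT⟩
  | @insert P B hP hfin ih =>
    have hB' : B ⊆ A := (subset_insert _ _).trans hB
    have e : T ∩ ⋂ Q ∈ insert P B, Q.P = P.P ∩ (T ∩ ⋂ Q ∈ B, Q.P) := by
      rw [biInter_insert, inter_left_comm]
    rw [e] at hne ⊢
    have hne' := hne.mono inter_subset_right
    rcases hA.2 P (hB (mem_insert _ _)) _ ⟨hne', B, hB', rfl⟩ hne with h | ⟨i, hi, hin, h, -, -⟩
    · rw [inter_eq_right.2 h]
      exact ih hB' hne'
    · exact ⟨i - 1, by omega, h⟩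

lemma cut (hT : IsSimanifold n T) (hA : IsDA n T A) {P : Dehyperplane N n T} (hP : P ∈ A)
    {X : Set (Euc N)} (hX : X ∈ flats A) (hne : (P.P ∩ X).Nonempty) (hns : ¬ X ⊆ P.P) :
    ∃ k, IsSimanifold (k + 1) X ∧ IsSimanifold k (P.P ∩ X) ∧ (P.plus ∩ X).Nonempty ∧
      (P.minus ∩ X).Nonempty := by
  obtain ⟨d, -, hd⟩ := flat_sim hT hA hX
  rcases hA.2 P hP X hX hne with h | ⟨i, hi, hin, h, hp, hm⟩
  · exact absurd h hns
  have h1 : i ≤ d := IsSimanifold.le hp hd inter_subset_right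
  have h2 : d ≤ i := IsSimanifold.le_of_open hp hd (O := (closure P.minus)ᶜ)
    isClosed_closure.isOpen_compl (by
      rw [plus_eq, inter_right_comm, inter_eq_right.2 (flat_sub hX)])
  obtain rfl : d = i := le_antisymm h2 h1
  refine ⟨d - 1, by rwa [Nat.sub_add_cancel hi], h, hp.1, hm.1⟩

/-- `C` is a good relatively open piece of the flat `Y`. -/
structure Good (A : Set (Dehyperplane N n T)) (C Y : Set (Euc N)) : Prop where
  flat : Y ∈ flats A
  ne : C.Nonempty
  op : ∃ O, IsOpen O ∧ C = Y ∩ O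
  pc : ∀ Z ∈ flats A, IsPreconnected (C ∩ Z)

lemma Good.sub {C Y : Set (Euc N)} (h : Good A C Y) : C ⊆ Y := by
  obtain ⟨O, -, rfl⟩ := h.op; exact inter_subset_left

lemma good_flat (hT : IsSimanifold n T) (hA : IsDA n T A) {X : Set (Euc N)} (hX : X ∈ flats A) :
    Good A X X := by
  refine ⟨hX, hX.1, ⟨univ, isOpen_univ, by simp⟩, fun Z hZ => ?_⟩
  rcases (X ∩ Z).eq_empty_or_nonempty with h | h
  · rw [h]; exact isPreconnected_empty
  · obtain ⟨d, -, hd⟩ := flat_sim hT hA (flat_inter hX hZ h)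
    exact IsSimanifold.isPreconnected hd

lemma good_zero {C Y : Set (Euc N)} (h : Good A C Y) {P : Dehyperplane N n T} (hP : P ∈ A)
    (hne : (C ∩ P.P).Nonempty) : Good A (C ∩ P.P) (Y ∩ P.P) := by
  obtain ⟨O, hO, hCO⟩ := h.op
  refine ⟨flat_inter h.flat (flat_P hP) (hne.mono (inter_subset_inter_left _ h.sub)), hne,
    ⟨O, hO, by rw [hCO, inter_right_comm]⟩, fun Z hZ => ?_⟩
  rw [inter_assoc]
  rcases (P.P ∩ Z).eq_empty_or_nonempty with h' | h'
  · rw [h', inter_empty]; exact isPreconnected_empty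
  · exact h.pc _ (flat_inter (flat_P hP) hZ h')

/-- splitting an arbitrary relatively open connected piece -/
lemma piece_split (hT : IsSimanifold n T) (hA : IsDA n T A) {C Y : Set (Euc N)} (hY : Y ∈ flats A)
    (op : ∃ O, IsOpen O ∧ C = Y ∩ O) (pc : IsPreconnected C) {P : Dehyperplane N n T} (hP : P ∈ A)
    (pc' : IsPreconnected (C ∩ P.P)) : IsPreconnected (C ∩ P.plus) ∧ IsPreconnected (C ∩ P.minus) ∧
    ((C ∩ P.P).Nonempty → ¬ Y ⊆ P.P → (C ∩ P.plus).Nonempty ∧ (C ∩ P.minus).Nonempty) := by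
  have hYT := flat_sub hY
  have hCY : C ⊆ Y := by obtain ⟨O, -, rfl⟩ := op; exact inter_subset_left
  by_cases hYP : Y ⊆ P.P
  · have e1 : C ∩ P.plus = ∅ := by
      rw [eq_empty_iff_forall_notMem]
      exact fun x hx => disjoint_left.1 P.disj_pP hx.2 (hYP (hCY hx.1))
    have e2 : C ∩ P.minus = ∅ := by
      rw [eq_empty_iff_forall_notMem]
      exact fun x hx => disjoint_left.1 P.disj_Pm (hYP (hCY hx.1)) hx.2
    rw [e1, e2]
    exact ⟨isPreconnected_empty, isPreconnected_empty, fun _ h => absurd hYP h⟩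
  rcases (P.P ∩ Y).eq_empty_or_nonempty with he | hne
  · have hcov : ∀ x ∈ C, x ∈ P.plus ∨ x ∈ P.minus := by
      intro x hx
      have : x ∈ T := hYT (hCY hx)
      rw [← P.union_eq] at this
      rcases this with (h | h) | h
      · exact Or.inl h
      · have : x ∈ P.P ∩ Y := ⟨h, hCY hx⟩
        rw [he] at this; exact absurd this (notMem_empty x)
      · exact Or.inr h
    have key : C ⊆ P.plus ∨ C ⊆ P.minus := by
      have := isPreconnected_iff_subset_of_disjoint.1 pc (closure P.minus)ᶜ (closure P.plus)ᶜ
        isClosed_closure.isOpen_compl isClosed_closure.isOpen_compl ?_ ?_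
      · rcases this with h | h
        · left; intro x hx; rw [plus_eq]; exact ⟨hYT (hCY hx), h hx⟩
        · right; intro x hx; rw [minus_eq]; exact ⟨hYT (hCY hx), h hx⟩
      · intro x hx
        rcases hcov x hx with h | h
        · rw [plus_eq] at h; exact Or.inl h.2
        · rw [minus_eq] at h; exact Or.inr h.2
      · rw [eq_empty_iff_forall_notMem]
        rintro x ⟨hx, h1, h2⟩
        rcases hcov x hx with h | h
        · exact h2 (subset_closure h)
        · exact h1 (subset_closure h)
    have hno : ¬ (C ∩ P.P).Nonempty := by
      rintro ⟨x, hx, hx'⟩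
      have : x ∈ P.P ∩ Y := ⟨hx', hCY hx⟩
      rw [he] at this; exact this
    refine ⟨?_, ?_, fun h => absurd h hno⟩
    · rcases key with h | h
      · rwa [inter_eq_left.2 h]
      · rw [(P.disj_pm.symm.mono_left h).inter_eq]; exact isPreconnected_empty
    · rcases key with h | h
      · rw [(P.disj_pm.mono_left h).inter_eq]; exact isPreconnected_empty
      · rwa [inter_eq_left.2 h]
  · obtain ⟨k, h1, h2, h3, h4⟩ := cut hT hA hP hY hne hYP
    have e : ∀ S, C ∩ (S ∩ Y) = C ∩ S := fun S => by
      rw [← inter_assoc, inter_eq_left]; exact inter_subset_left.trans hCY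
    have := ambConn rfl h1 h2 inter_subset_right (Sp := P.plus ∩ Y) (Sm := P.minus ∩ Y) (C := C) ?_
      (P.disj_pP.mono inter_subset_left inter_subset_left)
      (P.disj_Pm.symm.mono inter_subset_left inter_subset_left)
      (P.disj_pm.mono inter_subset_left inter_subset_left)
      ⟨(closure P.minus)ᶜ, isClosed_closure.isOpen_compl, by
        rw [plus_eq, inter_right_comm, inter_eq_right.2 hYT]⟩
      ⟨(closure P.plus)ᶜ, isClosed_closure.isOpen_compl, by
        rw [minus_eq, inter_right_comm, inter_eq_right.2 hYT]⟩
      h3 h4 op pc (by rwa [e])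
    · rw [e, e, e] at this
      exact ⟨this.1, this.2.1, fun h _ => this.2.2 h⟩
    · rw [← union_inter_distrib_right, ← union_inter_distrib_right, P.union_eq]
      exact subset_inter hYT Subset.rfl

lemma good_pm (hT : IsSimanifold n T) (hA : IsDA n T A) {C Y : Set (Euc N)} (h : Good A C Y)
    {P : Dehyperplane N n T} (hP : P ∈ A) : ((C ∩ P.plus).Nonempty → Good A (C ∩ P.plus) Y) ∧
      ((C ∩ P.minus).Nonempty → Good A (C ∩ P.minus) Y) := by
  obtain ⟨O, hO, hCO⟩ := h.op
  have hYT := flat_sub h.flat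
  have key : ∀ Z ∈ flats A, IsPreconnected (C ∩ Z ∩ P.plus) ∧ IsPreconnected (C ∩ Z ∩ P.minus) := by
    intro Z hZ
    rcases (Y ∩ Z).eq_empty_or_nonempty with he | hne
    · have : C ∩ Z = ∅ := subset_eq_empty (inter_subset_inter_left _ h.sub) he
      rw [this, empty_inter, empty_inter]
      exact ⟨isPreconnected_empty, isPreconnected_empty⟩
    · have := piece_split hT hA (C := C ∩ Z) (flat_inter h.flat hZ hne)
        ⟨O, hO, by rw [hCO, inter_right_comm]⟩ (h.pc Z hZ) hP ?_
      · exact ⟨this.1, this.2.1⟩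
      · rw [inter_assoc]
        rcases (Z ∩ P.P).eq_empty_or_nonempty with h' | h'
        · rw [h', inter_empty]; exact isPreconnected_empty
        · exact h.pc _ (flat_inter hZ (flat_P hP) h')
  constructor
  · intro hne
    refine ⟨h.flat, hne, ⟨O ∩ (closure P.minus)ᶜ, hO.inter isClosed_closure.isOpen_compl, ?_⟩,
      fun Z hZ => by rw [inter_right_comm]; exact (key Z hZ).1⟩
    rw [plus_eq, hCO, inter_assoc, ← inter_assoc O, inter_comm O T, inter_assoc, ← inter_assoc,
      inter_eq_left.2 hYT]
  · intro hne
    refine ⟨h.flat, hne, ⟨O ∩ (closure P.plus)ᶜ, hO.inter isClosed_closure.isOpen_compl, ?_⟩,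
      fun Z hZ => by rw [inter_right_comm]; exact (key Z hZ).2⟩
    rw [minus_eq, hCO, inter_assoc, ← inter_assoc O, inter_comm O T, inter_assoc, ← inter_assoc,
      inter_eq_left.2 hYT]

lemma good_cases (hT : IsSimanifold n T) (hA : IsDA n T A) {C Y : Set (Euc N)} (h : Good A C Y)
    {P : Dehyperplane N n T} (hP : P ∈ A) :
    (Good A (C ∩ P.P) (Y ∩ P.P) ∧ Y ∩ P.P = Y ∧ C ∩ P.plus = ∅ ∧ C ∩ P.minus = ∅) ∨
    (C ∩ P.P = ∅ ∧ Good A (C ∩ P.plus) Y ∧ C ∩ P.minus = ∅) ∨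
    (C ∩ P.P = ∅ ∧ C ∩ P.plus = ∅ ∧ Good A (C ∩ P.minus) Y) ∨
    (Good A (C ∩ P.P) (Y ∩ P.P) ∧ sdim Y = sdim (Y ∩ P.P) + 1 ∧ Good A (C ∩ P.plus) Y ∧
      Good A (C ∩ P.minus) Y) := by
  have hpm := good_pm hT hA h hP
  have hYT := flat_sub h.flat
  have hCT := h.sub.trans hYT
  have pcC : IsPreconnected C := by
    have := h.pc T (flat_T hT)
    rwa [inter_eq_left.2 hCT] at this
  by_cases hYP : Y ⊆ P.P
  · left
    have e1 : C ∩ P.plus = ∅ := by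
      rw [eq_empty_iff_forall_notMem]
      exact fun x hx => disjoint_left.1 P.disj_pP hx.2 (hYP (h.sub hx.1))
    have e2 : C ∩ P.minus = ∅ := by
      rw [eq_empty_iff_forall_notMem]
      exact fun x hx => disjoint_left.1 P.disj_Pm (hYP (h.sub hx.1)) hx.2
    refine ⟨good_zero h hP ?_, inter_eq_left.2 hYP, e1, e2⟩
    rw [inter_eq_left.2 (h.sub.trans hYP)]; exact h.ne
  right
  rcases (C ∩ P.P).eq_empty_or_nonempty with he | hne
  · have hcov : ∀ x ∈ C, x ∈ P.plus ∨ x ∈ P.minus := by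
      intro x hx
      have : x ∈ T := hCT hx
      rw [← P.union_eq] at this
      rcases this with (h | h) | h
      · exact Or.inl h
      · have : x ∈ C ∩ P.P := ⟨hx, h⟩
        rw [he] at this; exact absurd this (notMem_empty x)
      · exact Or.inr h
    have := isPreconnected_iff_subset_of_disjoint.1 pcC (closure P.minus)ᶜ (closure P.plus)ᶜ
        isClosed_closure.isOpen_compl isClosed_closure.isOpen_compl ?_ ?_
    · rcases this with h' | h'
      · left
        have hs : C ⊆ P.plus := by intro x hx; rw [plus_eq]; exact ⟨hCT hx, h' hx⟩
        refine ⟨he, hpm.1 ?_, (P.disj_pm.mono_left hs).inter_eq⟩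
        rw [inter_eq_left.2 hs]; exact h.ne
      · right; left
        have hs : C ⊆ P.minus := by intro x hx; rw [minus_eq]; exact ⟨hCT hx, h' hx⟩
        refine ⟨he, (P.disj_pm.symm.mono_left hs).inter_eq, hpm.2 ?_⟩
        rw [inter_eq_left.2 hs]; exact h.ne
    · intro x hx
      rcases hcov x hx with h | h
      · rw [plus_eq] at h; exact Or.inl h.2
      · rw [minus_eq] at h; exact Or.inr h.2
    · rw [eq_empty_iff_forall_notMem]
      rintro x ⟨hx, h1, h2⟩
      rcases hcov x hx with h | h
      · exact h2 (subset_closure h)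
      · exact h1 (subset_closure h)
  · right; right
    have h3 := (piece_split hT hA h.flat h.op pcC hP (h.pc _ (flat_P hP))).2.2 hne hYP
    refine ⟨good_zero h hP hne, ?_, hpm.1 h3.1, hpm.2 h3.2⟩
    obtain ⟨x, hx, hx'⟩ := hne
    obtain ⟨k, h1, h2, -, -⟩ := cut hT hA hP h.flat ⟨x, hx', h.sub hx⟩ hYP
    rw [inter_comm] at h2
    rw [IsSimanifold.sdim_eq h1, IsSimanifold.sdim_eq h2]

open Classical in
/-- Euler sum -/
def eul {k : ℕ} (a : Fin k → Dehyperplane N n T) (C Y : Set (Euc N)) : ℤ :=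
  ∑ σ : Fin k → SignType, if (C ∩ ⋂ i, (a i).part (σ i)).Nonempty then
    (-1) ^ sdim (Y ∩ ⋂ i, ⋂ _ : σ i = 0, (a i).P) else 0

lemma eul_empty {k : ℕ} (a : Fin k → Dehyperplane N n T) (Y : Set (Euc N)) : eul a ∅ Y = 0 := by
  simp [eul]

lemma eul_succ {k : ℕ} (a : Fin (k + 1) → Dehyperplane N n T) (C Y : Set (Euc N)) :
    eul a C Y = eul (Fin.tail a) (C ∩ (a 0).P) (Y ∩ (a 0).P) +
      (eul (Fin.tail a) (C ∩ (a 0).minus) Y + eul (Fin.tail a) (C ∩ (a 0).plus) Y) := by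
  have key : ∀ ε : SignType, ∀ τ : Fin k → SignType,
      (C ∩ ⋂ i, (a i).part ((Fin.cons ε τ : Fin (k + 1) → SignType) i)) =
        C ∩ (a 0).part ε ∩ ⋂ i, (Fin.tail a i).part (τ i) := by
    intro ε τ
    ext x; simp [Fin.forall_fin_succ, Fin.tail, and_assoc]
  have key2 : ∀ ε : SignType, ∀ τ : Fin k → SignType,
      (Y ∩ ⋂ i, ⋂ _ : (Fin.cons ε τ : Fin (k + 1) → SignType) i = 0, (a i).P) =
        (Y ∩ ⋂ _ : ε = 0, (a 0).P) ∩ ⋂ i, ⋂ _ : τ i = 0, (Fin.tail a i).P := by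
    intro ε τ
    ext x; simp [Fin.forall_fin_succ, Fin.tail, and_assoc]
  unfold eul
  rw [← (Fin.consEquiv fun _ : Fin (k + 1) => SignType).sum_comp, Fintype.sum_prod_type]
  have hu : (Finset.univ : Finset SignType) = {0, -1, 1} := rfl
  rw [hu, Finset.sum_insert (by decide), Finset.sum_insert (by decide), Finset.sum_singleton]
  congr 1
  · refine Finset.sum_congr rfl fun τ _ => ?_
    have k1 := key 0 τ
    have k2 := key2 0 τ
    simp only [iInter_true] at k2
    refine @if_congr _ _ _ (_) (_) _ _ _ _ (by rw [← show (a 0).part 0 = (a 0).P from rfl, ← k1]; rfl)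
      (by rw [← k2]; rfl) rfl
  congr 1
  · refine Finset.sum_congr rfl fun τ _ => ?_
    have k1 := key (-1) τ
    have k2 := key2 (-1) τ
    simp only [show ¬ ((-1 : SignType) = 0) by decide, iInter_false, inter_univ] at k2
    refine @if_congr _ _ _ (_) (_) _ _ _ _ (by rw [← show (a 0).part (-1) = (a 0).minus from rfl, ← k1]; rfl)
      (by rw [← k2]; rfl) rfl
  · refine Finset.sum_congr rfl fun τ _ => ?_
    have k1 := key 1 τ
    have k2 := key2 1 τ
    simp only [show ¬ ((1 : SignType) = 0) by decide, iInter_false, inter_univ] at k2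
    refine @if_congr _ _ _ (_) (_) _ _ _ _ (by rw [← show (a 0).part 1 = (a 0).plus from rfl, ← k1]; rfl)
      (by rw [← k2]; rfl) rfl

lemma euler (hT : IsSimanifold n T) (hA : IsDA n T A) : ∀ {k : ℕ} (a : Fin k → Dehyperplane N n T),
    (∀ i, a i ∈ A) → ∀ C Y, Good A C Y → eul a C Y = (-1) ^ sdim Y := by
  intro k
  induction k with
  | zero =>
    intro a _ C Y h
    simp [eul, h.ne]
  | succ k ih =>
    intro a ha C Y h
    have ih' := ih (Fin.tail a) (fun i => ha _)
    rw [eul_succ]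
    rcases good_cases hT hA h (ha 0) with ⟨h1, h2, h3, h4⟩ | ⟨h1, h2, h3⟩ | ⟨h1, h2, h3⟩ |
      ⟨h1, h2, h3, h4⟩
    · rw [ih' _ _ h1, h2, h3, h4, eul_empty]; simp
    · rw [ih' _ _ h2, h1, h3, eul_empty, eul_empty]; simp
    · rw [ih' _ _ h3, h1, h2, eul_empty, eul_empty]; simp
    · rw [ih' _ _ h1, ih' _ _ h3, ih' _ _ h4, h2, pow_succ]; ring

lemma part_inj (P : Dehyperplane N n T) {ε ε' : SignType} {x : Euc N} (h : x ∈ P.part ε)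
    (h' : x ∈ P.part ε') : ε = ε' := by
  have d1 : x ∈ P.plus → x ∉ P.P := fun h => disjoint_left.1 P.disj_pP h
  have d2 : x ∈ P.plus → x ∉ P.minus := fun h => disjoint_left.1 P.disj_pm h
  have d3 : x ∈ P.P → x ∉ P.minus := fun h => disjoint_left.1 P.disj_Pm h
  cases ε <;> cases ε' <;> simp only [Dehyperplane.part] at h h' <;> tauto

lemma finite_flats (hA : A.Finite) : (flats A).Finite := by
  refine (hA.finite_subsets.image fun B => T ∩ ⋂ P ∈ B, P.P).subset ?_
  rintro X ⟨-, B, hB, rfl⟩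
  exact ⟨B, hB, rfl⟩

end arr
end DA

namespace DA
section fin

variable {N n : ℕ} {T : Set (Euc N)} {A : Set (Dehyperplane N n T)}

lemma enum (hA : A.Finite) : ∃ (k : ℕ) (a : Fin k → Dehyperplane N n T), (∀ i, a i ∈ A) ∧
    Function.Injective a ∧ ∀ P ∈ A, ∃ i, a i = P := by
  have : Finite A := hA.to_subtype
  let e := Finite.equivFin A
  refine ⟨Nat.card A, fun i => (e.symm i).1, fun i => (e.symm i).2, ?_, ?_⟩
  · exact Subtype.val_injective.comp e.symm.injective
  · intro P hP
    exact ⟨e ⟨P, hP⟩, congrArg Subtype.val (e.symm_apply_apply ⟨P, hP⟩)⟩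

/-- the cell with sign vector `σ` -/
def cell {k : ℕ} (a : Fin k → Dehyperplane N n T) (σ : Fin k → SignType) : Set (Euc N) :=
  T ∩ ⋂ i, (a i).part (σ i)

/-- the support of the cell -/
def supp {k : ℕ} (a : Fin k → Dehyperplane N n T) (σ : Fin k → SignType) : Set (Euc N) :=
  T ∩ ⋂ i, ⋂ _ : σ i = 0, (a i).P

lemma mem_cell {k : ℕ} {a : Fin k → Dehyperplane N n T} {σ : Fin k → SignType} {x : Euc N} :
    x ∈ cell a σ ↔ x ∈ T ∧ ∀ i, x ∈ (a i).part (σ i) := by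
  simp [cell]

lemma mem_supp {k : ℕ} {a : Fin k → Dehyperplane N n T} {σ : Fin k → SignType} {x : Euc N} :
    x ∈ supp a σ ↔ x ∈ T ∧ ∀ i, σ i = 0 → x ∈ (a i).P := by
  simp [supp]

lemma cell_sub {k : ℕ} (a : Fin k → Dehyperplane N n T) (σ : Fin k → SignType) :
    cell a σ ⊆ supp a σ := by
  intro x hx
  rw [mem_cell] at hx
  rw [mem_supp]
  refine ⟨hx.1, fun i hi => ?_⟩
  have := hx.2 i
  rw [hi] at this
  exact this

lemma supp_flat {k : ℕ} {a : Fin k → Dehyperplane N n T} (ha : ∀ i, a i ∈ A)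
    {σ : Fin k → SignType} (h : (cell a σ).Nonempty) : supp a σ ∈ flats A := by
  refine ⟨h.mono (cell_sub a σ), {P | ∃ i, σ i = 0 ∧ a i = P}, ?_, ?_⟩
  · rintro P ⟨i, -, rfl⟩; exact ha i
  · ext x
    rw [mem_supp]
    simp only [mem_inter_iff, mem_iInter, mem_ofPred_eq]
    constructor
    · rintro ⟨h1, h2⟩
      refine ⟨h1, ?_⟩
      rintro P ⟨i, hi, rfl⟩
      exact h2 i hi
    · rintro ⟨h1, h2⟩
      exact ⟨h1, fun i hi => h2 _ ⟨i, hi, rfl⟩⟩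

lemma cell_iff {k : ℕ} {a : Fin k → Dehyperplane N n T} (hs : ∀ P ∈ A, ∃ i, a i = P)
    {σ : Fin k → SignType} {X : Set (Euc N)} (hX : X ∈ flats A) :
    (X ∩ ⋂ i, (a i).part (σ i)).Nonempty ↔ (cell a σ).Nonempty ∧ supp a σ ⊆ X := by
  constructor
  · rintro ⟨x, hx, hx'⟩
    refine ⟨⟨x, flat_sub hX hx, hx'⟩, ?_⟩
    obtain ⟨-, B, hB, rfl⟩ := hX
    intro y hy
    rw [mem_supp] at hy
    refine ⟨hy.1, ?_⟩
    simp only [mem_iInter]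
    intro P hP
    obtain ⟨i, rfl⟩ := hs P (hB hP)
    refine hy.2 i ?_
    have h1 : x ∈ (a i).part 0 := by
      have := hx.2
      simp only [mem_iInter] at this
      exact this _ hP
    exact part_inj _ (mem_iInter.1 hx' i) h1
  · rintro ⟨⟨x, hx⟩, h⟩
    exact ⟨x, h (cell_sub a σ hx), hx.2⟩

lemma supp_inter {k : ℕ} {a : Fin k → Dehyperplane N n T}
    {σ : Fin k → SignType} {X : Set (Euc N)} (hX : X ∈ flats A) (h : supp a σ ⊆ X) :
    X ∩ ⋂ i, ⋂ _ : σ i = 0, (a i).P = supp a σ := by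
  apply Subset.antisymm
  · exact inter_subset_inter_left _ (flat_sub hX)
  · exact fun x hx => ⟨h hx, hx.2⟩

open Classical in
lemma flat_sum (hT : IsSimanifold n T) (hA : IsDA n T A) {k : ℕ}
    {a : Fin k → Dehyperplane N n T} (ha : ∀ i, a i ∈ A) (hs : ∀ P ∈ A, ∃ i, a i = P)
    {X : Set (Euc N)} (hX : X ∈ flats A) :
    (-1 : ℤ) ^ sdim X = ∑ σ : Fin k → SignType, if (cell a σ).Nonempty ∧ supp a σ ⊆ X then
      (-1) ^ sdim (supp a σ) else 0 := by
  rw [← euler hT hA a ha X X (good_flat hT hA hX), eul]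
  refine Finset.sum_congr rfl fun σ _ => ?_
  by_cases h : (cell a σ).Nonempty ∧ supp a σ ⊆ X
  · rw [if_pos h, if_pos ((cell_iff hs hX).2 h), supp_inter hX h.2]
  · rw [if_neg h, if_neg (fun h' => h ((cell_iff hs hX).1 h'))]

lemma supp_eq_T {k : ℕ} {a : Fin k → Dehyperplane N n T} {σ : Fin k → SignType} :
    supp a σ = T ↔ ∀ i, σ i ≠ 0 := by
  constructor
  · intro h i hi
    obtain ⟨x, hx⟩ := (a i).simPlus.1
    have hxT : x ∈ T := (a i).union_eq.subset (Or.inl (Or.inl hx))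
    have : x ∈ supp a σ := by rw [h]; exact hxT
    exact disjoint_left.1 (a i).disj_pP hx ((mem_supp.1 this).2 i hi)
  · intro h
    ext x
    rw [mem_supp]
    exact ⟨fun h => h.1, fun hx => ⟨hx, fun i hi => absurd hi (h i)⟩⟩

lemma chambers_eq {k : ℕ} {a : Fin k → Dehyperplane N n T} (ha : ∀ i, a i ∈ A)
    (hi : Function.Injective a) (hs : ∀ P ∈ A, ∃ i, a i = P) :
    {C | IsChamber A C} = cell a '' {σ | (cell a σ).Nonempty ∧ ∀ i, σ i ≠ 0} := by
  ext C
  constructor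
  · rintro ⟨hne, ε, hε, rfl⟩
    have e : cell a (fun i => ε (a i)) = T ∩ ⋂ P ∈ A, P.part (ε P) := by
      ext x
      rw [mem_cell]
      simp only [mem_inter_iff, mem_iInter]
      refine and_congr_right fun _ => ⟨fun h P hP => ?_, fun h i => h _ (ha i)⟩
      obtain ⟨i, rfl⟩ := hs P hP
      exact h i
    exact ⟨fun i => ε (a i), ⟨by rw [e]; exact hne, fun i => hε _ (ha i)⟩, e⟩
  · rintro ⟨σ, ⟨hne, h0⟩, rfl⟩
    have hε : ∀ i, Function.extend a σ (fun _ => 1) (a i) = σ i := fun i => hi.extend_apply _ _ _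
    refine ⟨hne, Function.extend a σ (fun _ => 1), ?_, ?_⟩
    · intro P hP
      obtain ⟨i, rfl⟩ := hs P hP
      rw [hε]; exact h0 i
    · ext x
      rw [mem_cell]
      simp only [mem_inter_iff, mem_iInter]
      refine and_congr_right fun _ => ⟨fun h P hP => ?_, fun h i => ?_⟩
      · obtain ⟨i, rfl⟩ := hs P hP
        rw [hε]; exact h i
      · have := h _ (ha i)
        rwa [hε] at this

lemma cell_inj {k : ℕ} {a : Fin k → Dehyperplane N n T} {σ τ : Fin k → SignType}
    (h : (cell a σ).Nonempty) (he : cell a σ = cell a τ) : σ = τ := by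
  obtain ⟨x, hx⟩ := h
  have hx' := hx
  rw [he] at hx'
  funext i
  exact part_inj _ ((mem_cell.1 hx).2 i) ((mem_cell.1 hx').2 i)

theorem main (hT : IsSimanifold n T) (A : Set (Dehyperplane N n T)) (hA : IsDA n T A)
    (mu : Set (Euc N) → Set (Euc N) → ℤ)
    (hmu1 : ∀ X ∈ flats A, mu X X = 1)
    (hmu2 : ∀ X ∈ flats A, ∀ Y ∈ flats A, Y ⊆ X → Y ≠ X →
      ∑ᶠ Z ∈ {Z ∈ flats A | Z ⊆ X ∧ Y ⊆ Z}, mu X Z = 0) :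
    (Set.ncard {C | IsChamber A C} : ℤ) =
      ∑ᶠ X ∈ flats A, (-1 : ℤ) ^ (n - sdim X) * mu T X := by
  classical
  obtain ⟨k, a, ha, hi, hs⟩ := enum hA.1
  have hfl := finite_flats hA.1
  have hTf : T ∈ flats A := flat_T hT
  rw [chambers_eq ha hi hs, InjOn.ncard_image (fun σ hσ τ _ h => cell_inj hσ.1 h),
    finsum_mem_eq_finite_toFinset_sum _ hfl]
  have h1 : ∀ X ∈ hfl.toFinset, (-1 : ℤ) ^ (n - sdim X) * mu T X =
      ∑ σ : Fin k → SignType, (-1) ^ n * ((if (cell a σ).Nonempty ∧ supp a σ ⊆ X then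
      (-1) ^ sdim (supp a σ) else 0) * mu T X) := by
    intro X hX
    have hX' : X ∈ flats A := hfl.mem_toFinset.1 hX
    rw [← Finset.mul_sum, ← Finset.sum_mul, ← flat_sum hT hA ha hs hX', ← mul_assoc]
    obtain ⟨d, hd, hXd⟩ := flat_sim hT hA hX'
    rw [IsSimanifold.sdim_eq hXd, ← pow_add]
    congr 1
    rw [show n + d = (n - d) + 2 * d by omega, pow_add, pow_mul]
    simp
  rw [Finset.sum_congr rfl h1, Finset.sum_comm]
  have h2 : ∀ σ : Fin k → SignType, ∑ X ∈ hfl.toFinset,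
      (-1 : ℤ) ^ n * ((if (cell a σ).Nonempty ∧ supp a σ ⊆ X then
      (-1) ^ sdim (supp a σ) else 0) * mu T X) =
      if (cell a σ).Nonempty ∧ ∀ i, σ i ≠ 0 then 1 else 0 := by
    intro σ
    by_cases hne : (cell a σ).Nonempty
    swap
    · simp [hne]
    have hYf := supp_flat ha hne
    have h3 : ∑ X ∈ hfl.toFinset, (-1 : ℤ) ^ n * ((if (cell a σ).Nonempty ∧ supp a σ ⊆ X then
      (-1) ^ sdim (supp a σ) else 0) * mu T X) =
      (-1) ^ n * (-1) ^ sdim (supp a σ) *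
        ∑ᶠ Z ∈ {Z ∈ flats A | Z ⊆ T ∧ supp a σ ⊆ Z}, mu T Z := by
      rw [finsum_mem_eq_finite_toFinset_sum _ (hfl.subset (sep_subset _ _)), Finset.mul_sum]
      have : (hfl.subset (sep_subset (flats A) fun Z => Z ⊆ T ∧ supp a σ ⊆ Z)).toFinset =
          hfl.toFinset.filter fun Z => supp a σ ⊆ Z := by
        ext Z
        simp only [Finite.mem_toFinset, Finset.mem_filter, mem_ofPred_eq]
        exact ⟨fun h => ⟨h.1, h.2.2⟩, fun h => ⟨h.1, flat_sub h.1, h.2⟩⟩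
      rw [this, Finset.sum_filter]
      refine Finset.sum_congr rfl fun X _ => ?_
      by_cases h : supp a σ ⊆ X
      · simp [h, hne, mul_assoc]
      · simp [h]
    rw [h3]
    by_cases h0 : ∀ i, σ i ≠ 0
    · rw [if_pos ⟨hne, h0⟩, supp_eq_T.2 h0]
      have : {Z ∈ flats A | Z ⊆ T ∧ T ⊆ Z} = {T} := by
        ext Z
        simp only [mem_ofPred_eq, mem_singleton_iff]
        exact ⟨fun h => h.2.1.antisymm h.2.2, fun h => by
          rw [h]; exact ⟨hTf, Subset.rfl, Subset.rfl⟩⟩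
      rw [this, finsum_mem_singleton, hmu1 T hTf, IsSimanifold.sdim_eq hT, ← pow_add, mul_one,
        ← two_mul, pow_mul]
      simp
    · rw [if_neg (fun h => h0 h.2), hmu2 T hTf _ hYf (flat_sub hYf) (fun h => h0 (supp_eq_T.1 h)),
        mul_zero]
  rw [Finset.sum_congr rfl fun σ _ => h2 σ, Finset.sum_boole, Set.ncard_eq_toFinset_card',
    Set.toFinset_ofPred]

end fin
end DA

/-- the number of chambers of a DA `A` equals
`Σ_{X ∈ L_A} (−1)^{rk X} μ(T, X)` where `rk X = n − dim X` and `T` is the minimum flat. -/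
theorem card_chambers_eq_moebius_sum {N n : ℕ} (hn : 1 ≤ n) {T : Set (Euc N)}
    (hT : IsSimanifold n T) (A : Set (Dehyperplane N n T)) (hA : IsDA n T A)
    (mu : Set (Euc N) → Set (Euc N) → ℤ)
    (hmu0 : ∀ X ∈ flats A, ∀ Y ∈ flats A, ¬ Y ⊆ X → mu X Y = 0)
    (hmu1 : ∀ X ∈ flats A, mu X X = 1)
    (hmu2 : ∀ X ∈ flats A, ∀ Y ∈ flats A, Y ⊆ X → Y ≠ X →
      ∑ᶠ Z ∈ {Z ∈ flats A | Z ⊆ X ∧ Y ⊆ Z}, mu X Z = 0) :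
    (Set.ncard {C | IsChamber A C} : ℤ) =
      ∑ᶠ X ∈ flats A, (-1 : ℤ) ^ (n - sdim X) * mu T X := by
  exact DA.main hT A hA mu hmu1 hmu2
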